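/- arXiv:1612.02321 — 4 statements merged into one kernel-verified Lean document; each statement's English description precedes it below -/
import Mathlib

section
/- For positive integers M, N and real α > 0, the Jacobi polynomial F_{min(M,N)}^{α−1, |M−N|} has min(M,N) distinct roots, all lying in (0,1); denote them in increasing order by j_{M,N,α,1} < ⋯ < j_{M,N,α,min(M,N)}, and set j_{M,N,α,i} = 1 for min(M,N) < i ≤ N. Then for every integer N ≥ 2 the roots of consecutive levels interlace: j_{M,N,α,1} ≤ j_{M,N−1,α,1} ≤ j_{M,N,α,2} ≤ j_{M,N−1,α,2} ≤ ⋯ ≤ j_{M,N−1,α,N−1} ≤ j_{M,N,α,N}. -/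
/-!
Put `p = α - 1`, and for `n ≤ m` let `H_{n,m}(x) = x^{-p} (d/dx)^n [x^{n+p} (1-x)^m]`, a polynomial.
With `n = min M N` and `m = max M N` one has `n + |M - N| = m`, so the Jacobi polynomial
`F_n^{p,|M-N|}` is `H_{n,m} / (1-x)^{m-n}` and has the same zeros in `(0,1)` (`jacobiF_eq_zero_iff`).
Two first-order relations carry the argument:

* `H_{n+1,m} = x H_{n,m}' + (n+1+p) H_{n,m}`, that is, `(x^{n+1+p} H_{n,m})' = x^{n+p} H_{n+1,m}`;
* `(m+1) H_{n,m} = (m+1) H_{n,m+1} - x H_{n,m+1}'`, that is,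
  `(x^{-(m+1)} H_{n,m+1})' = -(m+1) x^{-(m+2)} H_{n,m}`.

By the first and Rolle's theorem, `H_{n+1,m}` (for `n < m`) has a zero in each of the `n + 1` gaps
cut out by `0`, the zeros of `H_{n,m}`, and `1`. Since `H_{n+1,m} / (1-x)^{m-n-1}` has degree at most
`n + 1` these are all its zeros in `(0,1)`; this proves at once the existence of the roots and the
interlacing for `N ≤ M` (`exists_enum_succ`). By the second relation, `H_{n,m}` (for `n ≤ m`) has a
zero in each of the `n` gaps cut out by the zeros of `H_{n,m+1}` and `1`, which is the interlacing
for `N > M` (`exists_enum_pred`).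
-/

open Finset

noncomputable section

/-- The degree-`n` Jacobi polynomial for the weight `x^p (1-x)^q` on `[0,1]`,
given by the Rodrigues formula
`F_n^{p,q}(x) = x^{−p} (1−x)^{−q} (d/dx)^n [x^{n+p} (1−x)^{n+q}]`. -/
def jacobiF (p q : ℝ) (n : ℕ) (x : ℝ) : ℝ :=
  x ^ (-p) * (1 - x) ^ (-q) *
    iteratedDeriv n (fun t : ℝ => t ^ ((n : ℝ) + p) * (1 - t) ^ ((n : ℝ) + q)) x

open Polynomial

/-- The first-order operator `x d/dx + c` on real polynomials. -/
def eulerOp (c : ℝ) (P : ℝ[X]) : ℝ[X] := X * derivative P + C c * P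

/-- `jacH p P n` is the polynomial `x^{-p} (d/dx)^n [x^{n+p} P(x)]`, built as
`(x d/dx + (p+n)) ⋯ (x d/dx + (p+1)) P`. The case of interest is `P = (1 - x)^m`. -/
def jacH (p : ℝ) (P : ℝ[X]) : ℕ → ℝ[X]
  | 0 => P
  | n + 1 => eulerOp ((n + 1 : ℕ) + p) (jacH p P n)

lemma eulerOp_comm (c d : ℝ) (P : ℝ[X]) :
    eulerOp c (eulerOp d P) = eulerOp d (eulerOp c P) := by
  simp only [eulerOp, derivative_add, derivative_mul, derivative_X, derivative_C]
  ring

lemma jacH_eulerOp (p c : ℝ) (P : ℝ[X]) (n : ℕ) :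
    jacH p (eulerOp c P) n = eulerOp c (jacH p P n) := by
  induction n with
  | zero => rfl
  | succ n ih => simp only [jacH, ih]; rw [eulerOp_comm]

lemma jacH_C_mul (p a : ℝ) (P : ℝ[X]) (n : ℕ) :
    jacH p (C a * P) n = C a * jacH p P n := by
  induction n with
  | zero => rfl
  | succ n ih =>
    simp only [jacH, ih, eulerOp, derivative_mul, derivative_C]
    ring

/-- Lowering the exponent `m + 1` to `m`. It holds for `n = 0` by inspection, and for all `n`
because the operators `x d/dx + c` commute. -/
lemma eulerOp_jacH (p : ℝ) (n m : ℕ) :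
    eulerOp (-((m + 1 : ℕ) : ℝ)) (jacH p ((1 - X) ^ (m + 1)) n)
      = C (-((m + 1 : ℕ) : ℝ)) * jacH p ((1 - X) ^ m) n := by
  rw [← jacH_eulerOp, ← jacH_C_mul]
  congr 1
  simp only [eulerOp, derivative_pow, derivative_sub, derivative_one, derivative_X, map_neg,
    map_natCast, Nat.add_sub_cancel]
  push_cast
  ring

/-! ### Comparison with the Rodrigues formula -/

lemma hasDerivAt_rpow_mul (c : ℝ) (P : ℝ[X]) {t : ℝ} (ht : 0 < t) :
    HasDerivAt (fun t : ℝ => t ^ c * P.eval t) (t ^ (c - 1) * (eulerOp c P).eval t) t := by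
  have h := (Real.hasDerivAt_rpow_const (p := c) (Or.inl ht.ne')).mul (P.hasDerivAt t)
  refine h.congr_deriv ?_
  have : t ^ c = t ^ (c - 1) * t := by
    rw [← Real.rpow_add_one ht.ne']; congr 1; ring
  simp only [eulerOp, eval_add, eval_mul, eval_X, eval_C]
  rw [this]; ring

lemma iteratedDeriv_rpow_mul (p : ℝ) (n : ℕ) (P : ℝ[X]) {x : ℝ} (hx : 0 < x) :
    iteratedDeriv n (fun t : ℝ => t ^ ((n : ℝ) + p) * P.eval t) x
      = x ^ p * (jacH p P n).eval x := by
  induction n generalizing P with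
  | zero => simp [jacH]
  | succ n ih =>
    rw [iteratedDeriv_succ']
    have h : deriv (fun t : ℝ => t ^ (((n + 1 : ℕ) : ℝ) + p) * P.eval t)
        =ᶠ[nhds x] fun t : ℝ => t ^ ((n : ℝ) + p) *
          (eulerOp ((n + 1 : ℕ) + p) P).eval t := by
      filter_upwards [lt_mem_nhds hx] with t ht
      rw [(hasDerivAt_rpow_mul _ P ht).deriv]
      congr 2
      push_cast; ring
    rw [h.iteratedDeriv_eq, ih, jacH_eulerOp, jacH]

lemma jacobiF_eq_zero_iff (p : ℝ) (n d : ℕ) {x : ℝ} (hx : x ∈ Set.Ioo (0 : ℝ) 1) :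
    jacobiF p (d : ℝ) n x = 0 ↔ (jacH p ((1 - X) ^ (n + d)) n).eval x = 0 := by
  have h1 : (fun t : ℝ => t ^ ((n : ℝ) + p) * (1 - t) ^ ((n : ℝ) + (d : ℝ)))
      = fun t : ℝ => t ^ ((n : ℝ) + p) * (((1 - X) ^ (n + d) : ℝ[X])).eval t := by
    funext t
    rw [← Nat.cast_add, Real.rpow_natCast]
    simp
  have h2 : 0 < 1 - x := by linarith [hx.2]
  rw [jacobiF, h1, iteratedDeriv_rpow_mul p n _ hx.1]
  have e1 := (Real.rpow_pos_of_pos hx.1 (-p)).ne'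
  have e2 := (Real.rpow_pos_of_pos h2 (-(d : ℝ))).ne'
  have e3 := (Real.rpow_pos_of_pos hx.1 p).ne'
  simp only [mul_eq_zero, e1, e2, e3, false_or]

/-! ### Divisibility and degree -/

lemma dvd_jacH (p : ℝ) (n d : ℕ) : (1 - X) ^ d ∣ jacH p ((1 - X) ^ (n + d)) n := by
  suffices h : ∀ m n d : ℕ, n + d = m → (1 - X : ℝ[X]) ^ d ∣ jacH p ((1 - X) ^ m) n from
    h _ _ _ rfl
  intro m n
  induction n with
  | zero =>
    intro d h
    rw [zero_add] at h
    rw [h, jacH]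
  | succ n ih =>
    intro d h
    have h1 := ih (d + 1) (by omega)
    refine dvd_add (Dvd.dvd.mul_left ?_ _) (Dvd.dvd.mul_left ?_ _)
    · simpa using pow_sub_one_dvd_derivative_of_pow_dvd h1
    · exact (pow_dvd_pow _ (Nat.le_succ d)).trans h1

lemma natDegree_jacH_le (p : ℝ) (P : ℝ[X]) (n : ℕ) :
    (jacH p P n).natDegree ≤ P.natDegree := by
  induction n with
  | zero => rfl
  | succ n ih =>
    refine natDegree_add_le_of_degree_le ?_ ((natDegree_C_mul_le _ _).trans ih)
    rw [natDegree_le_iff_coeff_eq_zero]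
    rintro (_ | k) hk
    · simp
    · rw [coeff_X_mul, coeff_derivative, coeff_eq_zero_of_natDegree_lt (by omega), zero_mul]

lemma jacH_eval_zero_ne {p : ℝ} (hp : -1 < p) (n m : ℕ) :
    (jacH p ((1 - X) ^ m) n).eval 0 ≠ 0 := by
  induction n with
  | zero => simp [jacH]
  | succ n ih =>
    have : ((n + 1 : ℕ) : ℝ) + p ≠ 0 := by
      have : (0 : ℝ) ≤ n := n.cast_nonneg
      push_cast; linarith
    simp only [jacH, eulerOp, eval_add, eval_mul, eval_X, eval_C, zero_mul, zero_add]
    exact mul_ne_zero this ih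

lemma jacH_eval_one {p : ℝ} {n m : ℕ} (h : n < m) : (jacH p ((1 - X) ^ m) n).eval 1 = 0 := by
  obtain ⟨F, hF⟩ := dvd_jacH p n (m - n)
  rw [Nat.add_sub_of_le h.le] at hF
  rw [hF]
  simp [Nat.sub_ne_zero_of_lt h]

/-! ### Enumerations of the roots -/

/-- `r` lists the zeros of `H_{n,m}` in `(0,1)` in increasing order as `r 0 < ⋯ < r (n-1)`, and is
continued by the value `1`. -/
structure IsEnum (p : ℝ) (n m : ℕ) (r : ℕ → ℝ) : Prop where
  mem : ∀ i < n, r i ∈ Set.Ioo (0 : ℝ) 1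
  lt : ∀ i i', i < i' → i' < n → r i < r i'
  root : ∀ x ∈ Set.Ioo (0 : ℝ) 1,
    ((jacH p ((1 - X) ^ m) n).eval x = 0 ↔ ∃ i, i < n ∧ r i = x)
  eq_one : ∀ i, n ≤ i → r i = 1

/-- The degree bound: `n` increasing zeros of `H_{n,m}` in `(0,1)` are all of its zeros there. -/
lemma IsEnum.of_roots {p : ℝ} (hp : -1 < p) {n m : ℕ} (hnm : n ≤ m) {r : ℕ → ℝ}
    (mem : ∀ i < n, r i ∈ Set.Ioo (0 : ℝ) 1) (lt : ∀ i i', i < i' → i' < n → r i < r i')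
    (root : ∀ i < n, (jacH p ((1 - X) ^ m) n).eval (r i) = 0) :
    IsEnum p n m (fun i => if i < n then r i else 1) := by
  refine ⟨fun i hi => by simpa [hi] using mem i hi, fun i i' h h' => ?_, fun x hx => ?_,
    fun i hi => by simp [hi]⟩
  · simpa [h', h.trans h'] using lt i i' h h'
  constructor
  swap
  · rintro ⟨i, hi, rfl⟩
    simpa [hi] using root i hi
  intro h0
  by_contra! hcon
  obtain ⟨F, hF⟩ := dvd_jacH p n (m - n)
  rw [Nat.add_sub_of_le hnm] at hF
  have hH0 : jacH p ((1 - X) ^ m) n ≠ 0 := fun h => jacH_eval_zero_ne hp n m (by rw [h]; simp)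
  have hF0 : F ≠ 0 := fun h => hH0 (by rw [hF, h, mul_zero])
  have hl : (1 - X : ℝ[X]).natDegree = 1 := by
    rw [← natDegree_neg, neg_sub]; exact natDegree_X_sub_C 1
  have h1X : (1 - X : ℝ[X]) ≠ 0 := fun h => by simp [h] at hl
  have hdeg : F.natDegree ≤ n := by
    have h1 := natDegree_jacH_le p ((1 - X) ^ m) n
    rw [hF, natDegree_mul (pow_ne_zero _ h1X) hF0, natDegree_pow, natDegree_pow, hl] at h1
    omega
  have hroot : ∀ y ∈ Set.Ioo (0 : ℝ) 1, (jacH p ((1 - X) ^ m) n).eval y = 0 → y ∈ F.roots := by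
    intro y hy hy0
    rw [mem_roots hF0, IsRoot.def]
    rw [hF, eval_mul] at hy0
    refine (mul_eq_zero.1 hy0).resolve_left ?_
    have : 1 - y ≠ 0 := by linarith [hy.2]
    simpa using fun h => absurd h this
  have hinj : Set.InjOn r (Finset.range n) := by
    intro i hi i' hi' h
    simp only [Finset.coe_range, Set.mem_Iio] at hi hi'
    rcases lt_trichotomy i i' with hlt | heq | hlt
    · exact absurd h (lt i i' hlt hi').ne
    · exact heq
    · exact absurd h (lt i' i hlt hi).ne'
  have hx : x ∉ (Finset.range n).image r := by
    simp only [Finset.mem_image, Finset.mem_range, not_exists, not_and]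
    intro i hi
    simpa [hi] using hcon i hi
  have hsub : (insert x ((Finset.range n).image r)).val ⊆ F.roots := by
    intro y hy
    simp only [Finset.mem_val, Finset.mem_insert, Finset.mem_image, Finset.mem_range] at hy
    rcases hy with rfl | ⟨i, hi, rfl⟩
    · exact hroot _ ‹_› h0
    · exact hroot _ (mem i hi) (root i hi)
  have hc := card_le_degree_of_subset_roots hsub
  rw [Finset.card_insert_of_notMem hx, Finset.card_image_of_injOn hinj, Finset.card_range] at hc
  omega

lemma IsEnum.unique {p : ℝ} {n m : ℕ} {r s : ℕ → ℝ} (hr : IsEnum p n m r)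
    (hs : IsEnum p n m s) : r = s := by
  have hrm : StrictMono (fun i : Fin n => r i) := fun i i' h => hr.lt _ _ h i'.2
  have hsm : StrictMono (fun i : Fin n => s i) := fun i i' h => hs.lt _ _ h i'.2
  have hrange : Set.range (fun i : Fin n => r i) = Set.range (fun i : Fin n => s i) := by
    ext x
    constructor
    · rintro ⟨i, rfl⟩
      obtain ⟨k, hk, hk'⟩ := (hs.root _ (hr.mem i i.2)).1
        ((hr.root _ (hr.mem i i.2)).2 ⟨i, i.2, rfl⟩)
      exact ⟨⟨k, hk⟩, hk'⟩
    · rintro ⟨i, rfl⟩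
      obtain ⟨k, hk, hk'⟩ := (hr.root _ (hs.mem i i.2)).1
        ((hs.root _ (hs.mem i i.2)).2 ⟨i, i.2, rfl⟩)
      exact ⟨⟨k, hk⟩, hk'⟩
  have h := (hrm.range_inj hsm).1 hrange
  funext i
  by_cases hi : i < n
  · exact congrFun h ⟨i, hi⟩
  · rw [hr.eq_one i (by omega), hs.eq_one i (by omega)]

lemma IsEnum.eval_eq_zero {p : ℝ} {n m : ℕ} {r : ℕ → ℝ} (hr : IsEnum p n m r) (h : n < m)
    (i : ℕ) : (jacH p ((1 - X) ^ m) n).eval (r i) = 0 := by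
  by_cases hi : i < n
  · exact (hr.root _ (hr.mem i hi)).2 ⟨i, hi, rfl⟩
  · rw [hr.eq_one i (by omega)]
    exact jacH_eval_one h

lemma IsEnum.pos {p : ℝ} {n m : ℕ} {r : ℕ → ℝ} (hr : IsEnum p n m r) (i : ℕ) : 0 < r i := by
  by_cases hi : i < n
  · exact (hr.mem i hi).1
  · rw [hr.eq_one i (by omega)]
    exact one_pos

lemma IsEnum.le_one {p : ℝ} {n m : ℕ} {r : ℕ → ℝ} (hr : IsEnum p n m r) (i : ℕ) : r i ≤ 1 := by
  by_cases hi : i < n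
  · exact (hr.mem i hi).2.le
  · rw [hr.eq_one i (by omega)]

lemma IsEnum.lt_succ {p : ℝ} {n m : ℕ} {r : ℕ → ℝ} (hr : IsEnum p n m r) {i : ℕ} (hi : i < n) :
    r i < r (i + 1) := by
  by_cases h : i + 1 < n
  · exact hr.lt _ _ (Nat.lt_succ_self i) h
  · rw [hr.eq_one (i + 1) (by omega)]
    exact (hr.mem i hi).2

lemma IsEnum.le_succ {p : ℝ} {n m : ℕ} {r : ℕ → ℝ} (hr : IsEnum p n m r) (i : ℕ) :
    r i ≤ r (i + 1) := by
  by_cases hi : i < n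
  · exact (hr.lt_succ hi).le
  · rw [hr.eq_one i (by omega), hr.eq_one (i + 1) (by omega)]

lemma IsEnum.mono {p : ℝ} {n m : ℕ} {r : ℕ → ℝ} (hr : IsEnum p n m r) : Monotone r :=
  monotone_nat_of_le_succ hr.le_succ

/-! ### Interlacing by Rolle's theorem -/

/-- Rolle's theorem for `x^c P(x)`. The left endpoint is a zero of `P`, or the point `0` in case
`c > 0`. -/
lemma exists_eulerOp_root (c : ℝ) (P : ℝ[X]) {a b : ℝ} (hab : a < b)
    (ha : 0 < a ∧ P.eval a = 0 ∨ a = 0 ∧ 0 < c) (hb : P.eval b = 0) :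
    ∃ y ∈ Set.Ioo a b, (eulerOp c P).eval y = 0 := by
  have ha0 : 0 ≤ a := by rcases ha with h | h <;> linarith [h.1]
  have hcont : ContinuousOn (fun t : ℝ => t ^ c * P.eval t) (Set.Icc a b) := by
    refine ContinuousOn.mul (fun t ht => ?_) P.continuous.continuousOn
    refine (Real.continuousAt_rpow_const t c ?_).continuousWithinAt
    rcases ha with h | h
    · exact Or.inl (h.1.trans_le ht.1).ne'
    · exact Or.inr h.2.le
  have hends : a ^ c * P.eval a = b ^ c * P.eval b := by
    rw [hb, mul_zero]
    rcases ha with h | h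
    · rw [h.2, mul_zero]
    · rw [h.1, Real.zero_rpow h.2.ne', zero_mul]
  obtain ⟨y, hy, hy0⟩ := exists_hasDerivAt_eq_zero (f := fun t : ℝ => t ^ c * P.eval t)
    hab hcont hends (fun y hy => hasDerivAt_rpow_mul c P (ha0.trans_lt hy.1))
  exact ⟨y, hy, (mul_eq_zero.1 hy0).resolve_left
    (Real.rpow_pos_of_pos (ha0.trans_lt hy.1) _).ne'⟩

lemma exists_enum_succ {p : ℝ} (hp : -1 < p) {n m : ℕ} (h : n < m) {r : ℕ → ℝ}
    (hr : IsEnum p n m r) :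
    ∃ s, IsEnum p (n + 1) m s ∧ ∀ i < n + 1, s i ≤ r i ∧ r i ≤ s (i + 1) := by
  -- The `i`-th gap is `(r (i - 1), r i)`, with `0` as left end when `i = 0`.
  have hex : ∀ i, ∃ y, i < n + 1 →
      (y < r i ∧ 0 < y ∧ (∀ k, k < i → r k < y) ∧
        (jacH p ((1 - X) ^ m) (n + 1)).eval y = 0) := by
    rintro (_ | i)
    · have hc : 0 < ((n + 1 : ℕ) : ℝ) + p := by
        have : (0 : ℝ) ≤ n := n.cast_nonneg
        push_cast; linarith
      obtain ⟨y, hy, hy0⟩ := exists_eulerOp_root (((n + 1 : ℕ) : ℝ) + p)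
        (jacH p ((1 - X) ^ m) n) (hr.pos 0) (Or.inr ⟨rfl, hc⟩) (hr.eval_eq_zero h 0)
      exact ⟨y, fun _ => ⟨hy.2, hy.1, fun k hk => absurd hk (Nat.not_lt_zero k), hy0⟩⟩
    · by_cases hi : i < n
      · obtain ⟨y, hy, hy0⟩ := exists_eulerOp_root (((n + 1 : ℕ) : ℝ) + p)
          (jacH p ((1 - X) ^ m) n) (hr.lt_succ hi)
          (Or.inl ⟨hr.pos i, hr.eval_eq_zero h i⟩) (hr.eval_eq_zero h (i + 1))
        exact ⟨y, fun _ => ⟨hy.2, (hr.pos i).trans hy.1,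
          fun k hk => (hr.mono (by omega)).trans_lt hy.1, hy0⟩⟩
      · exact ⟨0, fun h => by omega⟩
  choose y hy using hex
  refine ⟨_, IsEnum.of_roots hp (Nat.succ_le_of_lt h) (r := y)
    (fun i hi => ⟨(hy i hi).2.1, (hy i hi).1.trans_le (hr.le_one i)⟩)
    (fun i i' hii hi' => (hy i (hii.trans hi')).1.trans ((hy i' hi').2.2.1 i hii))
    (fun i hi => (hy i hi).2.2.2), fun i hi => ⟨?_, ?_⟩⟩
  · simpa [hi] using (hy i hi).1.le
  · by_cases hi' : i + 1 < n + 1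
    · simpa only [hi', if_true] using ((hy _ hi').2.2.1 i (Nat.lt_succ_self i)).le
    · simpa only [hi', if_false] using hr.le_one i

lemma exists_enum_pred {p : ℝ} (hp : -1 < p) {n m : ℕ} (h : n ≤ m) {r : ℕ → ℝ}
    (hr : IsEnum p n (m + 1) r) :
    ∃ s, IsEnum p n m s ∧ ∀ i, r i ≤ s i ∧ s i ≤ r (i + 1) := by
  have hex : ∀ i, ∃ y, i < n →
      (r i < y ∧ y < r (i + 1) ∧ (jacH p ((1 - X) ^ m) n).eval y = 0) := by
    intro i
    by_cases hi : i < n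
    · obtain ⟨y, hy, hy0⟩ := exists_eulerOp_root (-((m + 1 : ℕ) : ℝ))
        (jacH p ((1 - X) ^ (m + 1)) n) (hr.lt_succ hi)
        (Or.inl ⟨hr.pos i, hr.eval_eq_zero (by omega) i⟩) (hr.eval_eq_zero (by omega) (i + 1))
      rw [eulerOp_jacH, eval_mul, eval_C] at hy0
      have hm : -((m + 1 : ℕ) : ℝ) ≠ 0 := neg_ne_zero.2 (Nat.cast_ne_zero.2 (Nat.succ_ne_zero m))
      exact ⟨y, fun _ => ⟨hy.1, hy.2, (mul_eq_zero.1 hy0).resolve_left hm⟩⟩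
    · exact ⟨0, fun h => absurd h hi⟩
  choose y hy using hex
  have hs := IsEnum.of_roots hp h (r := y)
    (fun i hi => ⟨(hr.pos i).trans (hy i hi).1, (hy i hi).2.1.trans_le (hr.le_one _)⟩)
    (fun i i' hii hi' => (hy i (hii.trans hi')).2.1.trans_le
      ((hr.mono (Nat.succ_le_of_lt hii)).trans (hy i' hi').1.le))
    (fun i hi => (hy i hi).2.2)
  refine ⟨_, hs, fun i => ?_⟩
  by_cases hi : i < n
  · simpa only [hi, if_true] using ⟨(hy i hi).1.le, (hy i hi).2.1.le⟩
  · simp only [hi, if_false]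
    rw [hr.eq_one i (by omega), hr.eq_one (i + 1) (by omega)]
    exact ⟨le_rfl, le_rfl⟩

lemma exists_enum {p : ℝ} (hp : -1 < p) (m n : ℕ) (h : n ≤ m) : ∃ r, IsEnum p n m r := by
  induction n with
  | zero =>
    exact ⟨_, IsEnum.of_roots hp h (r := fun _ => 1) (by simp) (by simp) (by simp)⟩
  | succ n ih =>
    obtain ⟨r, hr⟩ := ih (by omega)
    obtain ⟨s, hs, -⟩ := exists_enum_succ hp h hr
    exact ⟨s, hs⟩

/-- for positive integers `M, N` and `α > 0`, the Jacobi polynomial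
`F_{min(M,N)}^{α−1,|M−N|}` has `min(M,N)` distinct roots in `(0,1)`; listing them
in increasing order as `j N 0 < j N 1 < ⋯` (`j N i` is `j_{M,N,α,i+1}`) and
setting `j N i = 1` for `min(M,N) ≤ i < N`, the roots of consecutive levels
interlace: `j N i ≤ j (N−1) i ≤ j N (i+1)`. -/
theorem statement11 (M : ℕ) (hM : 0 < M) (α : ℝ) (hα : 0 < α) :
    ∃ j : ℕ → ℕ → ℝ,
      (∀ N, 1 ≤ N →
        (∀ i, i < min M N → j N i ∈ Set.Ioo (0 : ℝ) 1) ∧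
        (∀ i i', i < i' → i' < min M N → j N i < j N i') ∧
        (∀ x ∈ Set.Ioo (0 : ℝ) 1,
          (jacobiF (α - 1) (|(M : ℝ) - (N : ℝ)|) (min M N) x = 0 ↔
            ∃ i, i < min M N ∧ j N i = x)) ∧
        (∀ i, min M N ≤ i → i < N → j N i = 1)) ∧
      ∀ N, 2 ≤ N → ∀ i, i + 1 < N →
        j N i ≤ j (N - 1) i ∧ j (N - 1) i ≤ j N (i + 1) := by
  have hp : -1 < α - 1 := by linarith
  choose j hj using fun N : ℕ => exists_enum hp (max M N) (min M N) min_le_max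
  refine ⟨j, fun N _ => ⟨(hj N).mem, (hj N).lt, fun x hx => ?_, fun i hi _ => (hj N).eq_one i hi⟩,
    fun N hN i hi => ?_⟩
  · have habs : |(M : ℝ) - (N : ℝ)| = ((max M N - min M N : ℕ) : ℝ) := by
      rw [Nat.cast_sub min_le_max, Nat.cast_max, Nat.cast_min, max_sub_min_eq_abs']
    rw [habs, jacobiF_eq_zero_iff _ _ _ hx, Nat.add_sub_of_le min_le_max]
    exact (hj N).root x hx
  · obtain ⟨K, rfl⟩ : ∃ K, N = K + 1 := ⟨N - 1, by omega⟩
    rw [Nat.add_sub_cancel]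
    have h1 := hj (K + 1)
    have h0 := hj K
    rcases Nat.lt_or_ge K M with hK | hK
    · rw [min_eq_right hK, max_eq_left hK] at h1
      rw [min_eq_right hK.le, max_eq_left hK.le] at h0
      obtain ⟨s, hs, hint⟩ := exists_enum_succ hp hK h0
      rw [h1.unique hs]
      exact hint i (by omega)
    · rw [min_eq_left (by omega), max_eq_right (by omega)] at h1
      rw [min_eq_left hK, max_eq_right hK] at h0
      obtain ⟨s, hs, hint⟩ := exists_enum_pred hp hK h1
      rw [h0.unique hs]
      exact hint i
end
end

section
/- Let (u1, …, uw) be a random vector in ℝ^w all of whose joint moments are finite (i.e., E|u_{i1} ⋯ u_{ih}| < ∞ for every finite sequence of indices). Suppose that for every integer h > 2 and every map φ : {1, …, h} → {1, …, w} one has Σ over all unordered set partitions {U1, …, Ut} of {1, …, h} into nonempty blocks of (−1)^{t−1}(t−1)! Π_{i=1}^{t} E[Π_{j∈Ui} u_{φ(j)}] = 0. Then (u1, …, uw) is a Gaussian random vector. -/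
/-!
Fix a linear combination `X = ∑ i, a i * u i`. The sum over set partitions of products of block
expectations is multilinear in the variables, so the cumulants of `X` of order greater than two
are linear combinations of the joint cumulants of the `u i` and vanish
(`cumulantSum_linear_combination`).

Cumulants of order `n` are derivatives at `0` of `cgf = log ∘ mgf`: Faà di Bruno's formula expresses
such a derivative as a sum over `OrderedFinpartition n`, a type in bijection with set partitions
(`cumulantSum_card`, `cumulantSum_moment`). As the cumulant generating function of a Gaussian law is
quadratic, its cumulants of order greater than two vanish as well (`cumulantSum_gaussian`).

The `n`-th moment equals the `n`-th cumulant plus a polynomial in lower moments, so `X` has the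
moments of the Gaussian law with the same mean and variance (`eq_of_cumulantSum_eq`). The Gaussian
law is determined by its moments: the even moments control `E[cosh (t X)]`, so the moment
generating function of `X` is entire and has the Taylor coefficients of the Gaussian one
(`map_eq_of_moments_eq`).
-/

open MeasureTheory Finset

noncomputable section

open scoped Classical

/-- `P` is an (unordered) set partition of `{0, …, h-1}` into nonempty blocks. -/
def IsSetPartition {h : ℕ} (P : Finset (Finset (Fin h))) : Prop :=
  (∀ U ∈ P, U.Nonempty) ∧ ∀ i : Fin h, ∃! U : Finset (Fin h), U ∈ P ∧ i ∈ U

/-- The cumulant-type alternating sum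
`Σ_{{U₁,…,U_t} partition} (−1)^{t−1} (t−1)! Π_i w(U_i)`. -/
noncomputable def cumulantSum (h : ℕ) (w : Finset (Fin h) → ℝ) : ℝ :=
  ∑ P ∈ Finset.univ.filter (fun P : Finset (Finset (Fin h)) => IsSetPartition P),
    (-1 : ℝ) ^ (P.card - 1) * ((P.card - 1).factorial : ℝ) * ∏ U ∈ P, w U

/-! ### Set partitions and ordered finpartitions -/

/-- The set of blocks underlying an ordered finpartition. -/
def blocks {n : ℕ} (c : OrderedFinpartition n) : Finset (Finset (Fin n)) :=
  univ.image fun m => univ.image (c.emb m)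

lemma image_emb_injective {n : ℕ} (c : OrderedFinpartition n) :
    Function.Injective fun m => (univ.image (c.emb m) : Finset (Fin n)) := by
  intro i j hij
  by_contra hne
  have hmem : c.emb i ⟨0, c.partSize_pos i⟩ ∈ (univ.image (c.emb j) : Finset (Fin n)) := by
    rw [← show univ.image (c.emb i) = univ.image (c.emb j) from hij]
    exact mem_image_of_mem _ (mem_univ _)
  obtain ⟨b, -, hb⟩ := mem_image.1 hmem
  exact c.emb_ne_emb_of_ne hne hb.symm

lemma isSetPartition_blocks {n : ℕ} (c : OrderedFinpartition n) : IsSetPartition (blocks c) := by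
  refine ⟨fun U hU => ?_, fun i => ?_⟩
  · obtain ⟨m, -, rfl⟩ := mem_image.1 hU
    exact ⟨_, mem_image_of_mem _ (mem_univ ⟨0, c.partSize_pos m⟩)⟩
  · obtain ⟨m, r, rfl⟩ := c.cover i
    refine ⟨univ.image (c.emb m),
      ⟨mem_image_of_mem _ (mem_univ m), mem_image_of_mem _ (mem_univ r)⟩, ?_⟩
    rintro U ⟨hU, hi⟩
    obtain ⟨m', -, rfl⟩ := mem_image.1 hU
    obtain ⟨r', -, hr'⟩ := mem_image.1 hi
    by_cases h : m' = m
    · rw [h]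
    · exact absurd hr' (c.emb_ne_emb_of_ne h)

lemma card_blocks {n : ℕ} (c : OrderedFinpartition n) : (blocks c).card = c.length := by
  rw [blocks, card_image_of_injective _ (image_emb_injective c)]
  simp

lemma card_image_emb {n : ℕ} (c : OrderedFinpartition n) (m : Fin c.length) :
    (univ.image (c.emb m) : Finset (Fin n)).card = c.partSize m := by
  rw [card_image_of_injective _ (c.emb_strictMono m).injective]
  simp

/-- The greatest elements of the blocks can be read off from the underlying set partition. -/
lemma mem_range_top {n : ℕ} (c : OrderedFinpartition n) (x : Fin n) :
    x ∈ Set.range (fun m ↦ c.emb m ⟨c.partSize m - 1, Nat.sub_one_lt_of_lt (c.partSize_pos m)⟩) ↔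
      ∃ U ∈ blocks c, x ∈ U ∧ ∀ y ∈ U, y ≤ x := by
  constructor
  · rintro ⟨m, rfl⟩
    refine ⟨univ.image (c.emb m), mem_image_of_mem _ (mem_univ m),
      mem_image_of_mem _ (mem_univ _), fun y hy => ?_⟩
    obtain ⟨r, -, rfl⟩ := mem_image.1 hy
    refine (c.emb_strictMono m).monotone ?_
    rw [Fin.le_def]
    have := r.2
    simp only
    omega
  · rintro ⟨U, hU, hx, hmax⟩
    obtain ⟨m, -, rfl⟩ := mem_image.1 hU
    obtain ⟨r, -, rfl⟩ := mem_image.1 hx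
    refine ⟨m, le_antisymm (hmax _ (mem_image_of_mem _ (mem_univ _))) ?_⟩
    refine (c.emb_strictMono m).monotone ?_
    rw [Fin.le_def]
    have := r.2
    simp only
    omega

/-- The ordering of the blocks and the parameterization of each block are canonical, hence
determined by the underlying set partition. -/
lemma blocks_injective (n : ℕ) : Function.Injective (blocks (n := n)) := by
  intro c d hcd
  have hlen : c.length = d.length := by rw [← card_blocks, ← card_blocks, hcd]
  have htop : ∀ x, _ ↔ _ := fun x => (mem_range_top c x).trans
    ((by rw [hcd] : _ ↔ _).trans (mem_range_top d x).symm)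
  have hc := card_image_emb c
  have hd := card_image_emb d
  obtain ⟨L, s, s_pos, e, e_mono, e_parts, e_disj, e_cov⟩ := c
  obtain ⟨L', s', s_pos', e', e_mono', e_parts', e_disj', e_cov'⟩ := d
  dsimp only at hlen htop hc hd
  subst hlen
  have htop' := (StrictMono.range_inj e_parts e_parts').1 (Set.ext htop)
  have himg : ∀ m, (univ.image (e m) : Finset (Fin n)) = univ.image (e' m) := by
    intro m
    set x := e m ⟨s m - 1, Nat.sub_one_lt_of_lt (s_pos m)⟩ with hx
    have hx' : x = e' m ⟨s' m - 1, Nat.sub_one_lt_of_lt (s_pos' m)⟩ := congrFun htop' m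
    refine ((isSetPartition_blocks ⟨L, s', s_pos', e', e_mono', e_parts', e_disj', e_cov'⟩).2
      x).unique ⟨?_, mem_image_of_mem _ (mem_univ _)⟩ ⟨mem_image_of_mem _ (mem_univ m), ?_⟩
    · rw [← hcd]
      exact mem_image_of_mem _ (mem_univ m)
    · rw [hx']
      exact mem_image_of_mem _ (mem_univ _)
  have hs : s = s' := funext fun m => by rw [← hc m, himg m, hd m]
  subst hs
  have he : e = e' := funext fun m => by
    refine (StrictMono.range_inj (e_mono m) (e_mono' m)).1 ?_
    simpa using congrArg (fun U : Finset (Fin n) => (U : Set (Fin n))) (himg m)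
  subst he
  rfl

/-- Every set partition comes from an ordered one: order the blocks by their greatest elements and
list each block increasingly. -/
lemma exists_blocks_eq {n : ℕ} {P : Finset (Finset (Fin n))} (hP : IsSetPartition P) :
    ∃ c, blocks c = P := by
  -- `T` is the set of greatest elements of blocks; listing it increasingly orders the blocks.
  let T : Finset (Fin n) := univ.filter fun i => ∃ U ∈ P, i ∈ U ∧ ∀ y ∈ U, y ≤ i
  let e := T.orderEmbOfFin rfl
  have he : ∀ k, ∃ U ∈ P, e k ∈ U ∧ ∀ y ∈ U, y ≤ e k := fun k =>
    (mem_filter.1 (T.orderEmbOfFin_mem rfl k)).2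
  choose part part_mem mem_part part_le using he
  have part_inj : ∀ i j x, x ∈ part i → x ∈ part j → i = j := by
    intro i j x hi hj
    have h := (hP.2 x).unique ⟨part_mem i, hi⟩ ⟨part_mem j, hj⟩
    refine e.injective (le_antisymm (part_le j _ (h ▸ mem_part i)) (part_le i _ (h ▸ mem_part j)))
  have exists_part : ∀ U ∈ P, ∃ k, part k = U := by
    intro U hU
    have hne := hP.1 U hU
    have hT : U.max' hne ∈ T := mem_filter.2
      ⟨mem_univ _, U, hU, U.max'_mem hne, fun y hy => U.le_max' y hy⟩
    have : U.max' hne ∈ Set.range e := by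
      rw [Finset.range_orderEmbOfFin]; exact hT
    obtain ⟨k, hk⟩ := this
    refine ⟨k, (hP.2 (e k)).unique ⟨part_mem k, mem_part k⟩ ⟨hU, ?_⟩⟩
    rw [hk]; exact U.max'_mem hne
  have part_ne : ∀ k, (part k).Nonempty := fun k => hP.1 _ (part_mem k)
  have part_pos : ∀ k, 0 < (part k).card := fun k => card_pos.2 (part_ne k)
  have top_eq : ∀ k, (part k).orderEmbOfFin rfl
      ⟨(part k).card - 1, Nat.sub_one_lt_of_lt (part_pos k)⟩ = e k := by
    intro k
    rw [Finset.orderEmbOfFin_last rfl (part_pos k)]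
    exact le_antisymm (part_le k _ (max'_mem _ _)) (le_max' _ _ (mem_part k))
  let c : OrderedFinpartition n :=
    { length := T.card
      partSize := fun k => (part k).card
      partSize_pos := part_pos
      emb := fun k => (part k).orderEmbOfFin rfl
      emb_strictMono := fun k => ((part k).orderEmbOfFin rfl).strictMono
      parts_strictMono := by
        intro i j hij
        simp only [top_eq]
        exact e.strictMono hij
      disjoint := by
        intro i _ j _ hij
        simp only [Function.onFun, Finset.range_orderEmbOfFin]
        rw [Set.disjoint_left]
        exact fun x hi hj => hij (part_inj i j x hi hj)
      cover := by
        intro x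
        obtain ⟨U, ⟨hU, hx⟩, -⟩ := hP.2 x
        obtain ⟨k, rfl⟩ := exists_part U hU
        refine ⟨k, ?_⟩
        rw [Finset.range_orderEmbOfFin]
        exact hx }
  have himg : ∀ k : Fin T.card, (univ.image (c.emb k) : Finset (Fin n)) = part k := by
    intro k
    rw [← Finset.coe_inj, coe_image, coe_univ, Set.image_univ]
    exact Finset.range_orderEmbOfFin _ _
  refine ⟨c, Finset.ext fun U => ⟨fun hU => ?_, fun hU => ?_⟩⟩
  · obtain ⟨k, -, rfl⟩ := mem_image.1 hU
    rw [himg k]; exact part_mem k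
  · obtain ⟨k, rfl⟩ := exists_part U hU
    rw [← himg k]
    exact mem_image_of_mem (fun m => univ.image (c.emb m)) (mem_univ k)

/-- When the weight of a block depends only on its size, the cumulant sum takes the shape of the sum
in Faà di Bruno's formula for `log` at `1`. -/
lemma cumulantSum_card (n : ℕ) (m : ℕ → ℝ) :
    cumulantSum n (fun U => m U.card) = ∑ c : OrderedFinpartition n,
      (-1 : ℝ) ^ (c.length - 1) * ((c.length - 1).factorial : ℝ) * ∏ j, m (c.partSize j) := by
  rw [cumulantSum]
  refine (Finset.sum_bij (fun c _ => blocks c) (fun c _ => ?_) (fun c _ d _ h => ?_)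
    (fun P hP => ?_) (fun c _ => ?_)).symm
  · exact mem_filter.2 ⟨mem_univ _, isSetPartition_blocks c⟩
  · exact blocks_injective n h
  · obtain ⟨c, hc⟩ := exists_blocks_eq (mem_filter.1 hP).2
    exact ⟨c, mem_univ _, hc⟩
  · rw [card_blocks]
    congr 1
    rw [blocks, prod_image ((image_emb_injective c).injOn)]
    exact prod_congr rfl fun j _ => by rw [card_image_emb]

/-! ### Multilinearity of joint cumulants -/

/-- Peeling off the variable `j` from a product of expectations over the blocks of a partition. -/
lemma prod_update {S : Type*} [CommRing S] [Algebra ℝ S] (E : S →ₗ[ℝ] ℝ) {h : ℕ}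
    [DecidableEq (Fin h)] {P : Finset (Finset (Fin h))} {j : Fin h} {V : Finset (Fin h)} (hV : V ∈ P) (hj : j ∈ V)
    (hV' : ∀ U ∈ P, j ∈ U → U = V) (f : Fin h → S) (x : S) :
    ∏ U ∈ P, E (∏ i ∈ U, Function.update f j x i) =
      E (x * ∏ i ∈ V.erase j, f i) * ∏ U ∈ P.erase V, E (∏ i ∈ U, f i) := by
  rw [← mul_prod_erase P _ hV, ← mul_prod_erase V _ hj, Function.update_self]
  have h1 : ∏ i ∈ V.erase j, Function.update f j x i = ∏ i ∈ V.erase j, f i :=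
    prod_congr rfl fun i hi => Function.update_of_ne (ne_of_mem_erase hi) _ _
  have h2 : ∏ U ∈ P.erase V, E (∏ i ∈ U, Function.update f j x i) =
      ∏ U ∈ P.erase V, E (∏ i ∈ U, f i) := by
    refine prod_congr rfl fun U hU => congrArg E (prod_congr rfl fun i hi => ?_)
    refine Function.update_of_ne ?_ _ _
    rintro rfl
    exact ne_of_mem_erase hU (hV' U (mem_of_mem_erase hU) hi)
  rw [h1, h2]

/-- The product of the expectations of the block products, as a multilinear form in the
variables. -/
def blockProd {S : Type*} [CommRing S] [Algebra ℝ S] (E : S →ₗ[ℝ] ℝ) {h : ℕ}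
    (P : Finset (Finset (Fin h))) (hP : IsSetPartition P) :
    MultilinearMap ℝ (fun _ : Fin h => S) ℝ where
  toFun f := ∏ U ∈ P, E (∏ i ∈ U, f i)
  map_update_add' f j x y := by
    obtain ⟨V, ⟨hV, hj⟩, huniq⟩ := hP.2 j
    have key := prod_update E hV hj (fun U hU hjU => huniq U ⟨hU, hjU⟩) f
    simp only [key, add_mul, map_add]
  map_update_smul' f j a x := by
    obtain ⟨V, ⟨hV, hj⟩, huniq⟩ := hP.2 j
    have key := prod_update E hV hj (fun U hU hjU => huniq U ⟨hU, hjU⟩) f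
    simp only [key, smul_mul_assoc, map_smul]

/-- Cumulants of a linear combination vanish when all joint cumulants do, by multilinearity. -/
lemma cumulantSum_linear_combination {S : Type*} [CommRing S] [Algebra ℝ S] (E : S →ₗ[ℝ] ℝ)
    {h w : ℕ} (u : Fin w → S)
    (hcum : ∀ φ : Fin h → Fin w, cumulantSum h (fun U => E (∏ j ∈ U, u (φ j))) = 0)
    (a : Fin w → ℝ) :
    cumulantSum h (fun U => E ((∑ i, a i • u i) ^ U.card)) = 0 := by
  let K : MultilinearMap ℝ (fun _ : Fin h => S) ℝ :=
    ∑ P : {P : Finset (Finset (Fin h)) // IsSetPartition P},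
      ((-1 : ℝ) ^ (P.1.card - 1) * ((P.1.card - 1).factorial : ℝ)) • blockProd E P.1 P.2
  have hK : ∀ f : Fin h → S, K f = cumulantSum h (fun U => E (∏ j ∈ U, f j)) := by
    intro f
    simp only [K, _root_.sum_apply, smul_apply, smul_eq_mul]
    rw [cumulantSum]
    exact (Finset.sum_subtype _ (fun P => by simp)
      (fun P : Finset (Finset (Fin h)) => (-1 : ℝ) ^ (P.card - 1) *
        ((P.card - 1).factorial : ℝ) * ∏ U ∈ P, E (∏ j ∈ U, f j))).symm
  have h1 : K (fun _ => ∑ i, a i • u i) = 0 := by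
    rw [MultilinearMap.map_sum K (fun _ i => a i • u i)]
    refine sum_eq_zero fun φ _ => ?_
    rw [MultilinearMap.map_smul_univ K (fun j => a (φ j)) (fun j => u (φ j)), hK, hcum, smul_zero]
  rw [hK] at h1
  simpa only [prod_const] using h1

/-- Finiteness of the joint moments gives integrability of every polynomial in the variables. -/
lemma integrable_of_mem_adjoin {Ω : Type*} [MeasurableSpace Ω] (μ : Measure Ω) {w : ℕ}
    (u : Fin w → Ω → ℝ)
    (hmom : ∀ (h : ℕ) (φ : Fin h → Fin w), Integrable (fun ω => ∏ j, u (φ j) ω) μ)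
    {f : Ω → ℝ} (hf : f ∈ Algebra.adjoin ℝ (Set.range u)) : Integrable f μ := by
  rw [← Subalgebra.mem_toSubmodule, Algebra.adjoin_eq_span] at hf
  induction hf using Submodule.span_induction with
  | mem x hx =>
    obtain ⟨l, hl, rfl⟩ := Submonoid.exists_list_of_mem_closure hx
    choose g hg using fun j : Fin l.length => hl _ (List.getElem_mem j.2)
    have := hmom l.length g
    convert this using 1
    have h2 : l = List.ofFn (fun j : Fin l.length => u (g j)) := by
      conv_lhs => rw [← List.ofFn_getElem (xs := l)]
      congr 1
      funext j
      exact (hg j).symm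
    conv_lhs => rw [h2]
    rw [List.prod_ofFn]
    ext ω
    simp
  | zero => exact integrable_zero _ _ _
  | add x y _ _ hx hy => exact hx.add hy
  | smul a x _ hx => exact hx.smul a

/-! ### Moments from cumulants -/

/-- The partition `{univ}` contributes `m n`, and every other one involves only lower moments, so
the cumulants of order greater than two and the first two moments determine all moments. -/
lemma eq_of_cumulantSum_eq (m g : ℕ → ℝ) (h0 : m 0 = g 0) (h1 : m 1 = g 1) (h2 : m 2 = g 2)
    (hc : ∀ n, 2 < n → cumulantSum n (fun U => m U.card) = cumulantSum n (fun U => g U.card))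
    (n : ℕ) : m n = g n := by
  induction n using Nat.strong_induction_on with
  | _ n ih =>
    by_cases hn : 2 < n
    swap
    · interval_cases n <;> assumption
    have hne : (univ : Finset (Fin n)).Nonempty := ⟨⟨0, by omega⟩, mem_univ _⟩
    have hmem : ({univ} : Finset (Finset (Fin n))) ∈
        univ.filter (fun P : Finset (Finset (Fin n)) => IsSetPartition P) := by
      refine mem_filter.2 ⟨mem_univ _, fun U hU => ?_, fun i => ⟨univ, by simp, by simp⟩⟩
      rw [mem_singleton.1 hU]; exact hne
    have := hc n hn
    rw [cumulantSum, cumulantSum, ← add_sum_erase _ _ hmem, ← add_sum_erase _ _ hmem] at this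
    have hrest : ∀ P ∈ (univ.filter
        (fun P : Finset (Finset (Fin n)) => IsSetPartition P)).erase {univ},
        (-1 : ℝ) ^ (P.card - 1) * ((P.card - 1).factorial : ℝ) * ∏ U ∈ P, m U.card =
        (-1 : ℝ) ^ (P.card - 1) * ((P.card - 1).factorial : ℝ) * ∏ U ∈ P, g U.card := by
      intro P hP
      have hPart := (mem_filter.1 (mem_of_mem_erase hP)).2
      congr 1
      refine prod_congr rfl fun U hU => ih _ ?_
      have hUne : U ≠ univ := by
        rintro rfl
        refine ne_of_mem_erase hP (Finset.ext fun V => ?_)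
        rw [mem_singleton]
        refine ⟨fun hV => ?_, fun hV => hV ▸ hU⟩
        obtain ⟨i, hi⟩ := hPart.1 V hV
        exact (hPart.2 i).unique ⟨hV, hi⟩ ⟨hU, mem_univ i⟩
      simpa using Finset.card_lt_card (Finset.ssubset_univ_iff.2 hUne)
    rw [sum_congr rfl hrest] at this
    simpa using this

/-! ### Cumulants as derivatives of the cumulant generating function -/

open ProbabilityTheory

lemma iteratedDeriv_log_one {n : ℕ} (hn : n ≠ 0) :
    iteratedDeriv n Real.log 1 = (-1 : ℝ) ^ (n - 1) * ((n - 1).factorial : ℝ) := by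
  obtain ⟨k, rfl⟩ := Nat.exists_eq_succ_of_ne_zero hn
  rw [Nat.succ_eq_add_one, iteratedDeriv_succ', Real.deriv_log', iteratedDeriv_eq_iterate,
    iter_deriv_inv]
  simp

/-- The cumulant sums of the moments are the derivatives at `0` of the cumulant generating
function: this is Faà di Bruno's formula for `log ∘ mgf`. -/
lemma cumulantSum_moment {Ω : Type*} [MeasurableSpace Ω] (μ : Measure Ω) [IsProbabilityMeasure μ]
    (X : Ω → ℝ) (hX : 0 ∈ interior (integrableExpSet X μ)) {n : ℕ} (hn : n ≠ 0) :
    cumulantSum n (fun U => μ[X ^ U.card]) = iteratedDeriv n (cgf X μ) 0 := by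
  have hcgf : cgf X μ = Real.log ∘ mgf X μ := rfl
  rw [hcgf, iteratedDeriv_comp_eq_sum_orderedFinpartition (n := ⊤) ?_ ?_ le_top,
    cumulantSum_card n (fun k => μ[X ^ k])]
  · refine sum_congr rfl fun c _ => ?_
    rw [mgf_zero, iteratedDeriv_log_one (c.length_pos (Nat.pos_of_ne_zero hn)).ne']
    simp only [iteratedDeriv_mgf_zero hX]
  · rw [mgf_zero, Real.contDiffAt_log]
    exact one_ne_zero
  · exact (analyticAt_mgf hX).contDiffAt

lemma cumulantSum_gaussian (m : ℝ) (v : NNReal) {n : ℕ} (hn : 2 < n) :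
    cumulantSum n (fun U => ∫ x, x ^ U.card ∂gaussianReal m v) = 0 := by
  have h := cumulantSum_moment (gaussianReal m v) id
    (by rw [integrableExpSet_id_gaussianReal]; simp) (n := n) (by omega)
  have hcgf : cgf id (gaussianReal m v) = fun t => m * t + v * t ^ 2 / 2 := by
    funext t
    exact cgf_gaussianReal (by simp) t
  obtain ⟨k, rfl⟩ : ∃ k, n = k + 1 + 1 + 1 := ⟨n - 3, by omega⟩
  have d1 : deriv (fun t : ℝ => m * t + v * t ^ 2 / 2) = fun t => m + v * t := by
    funext t
    have h3 : HasDerivAt (fun t : ℝ => m * t + v * t ^ 2 / 2) (m * 1 + v * (2 * t) / 2) t := by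
      refine ((hasDerivAt_id' t).const_mul m).add (HasDerivAt.div_const (HasDerivAt.const_mul _ ?_) 2)
      simpa using hasDerivAt_pow 2 t
    rw [h3.deriv]; ring
  have d2 : deriv (fun t : ℝ => m + v * t) = fun _ => (v : ℝ) := by
    funext t
    simp
  have d3 : deriv (fun _ : ℝ => (v : ℝ)) = fun _ => (0 : ℝ) := by
    funext t
    simp
  rw [hcgf, iteratedDeriv_succ', iteratedDeriv_succ', iteratedDeriv_succ', d1, d2, d3] at h
  simpa [iteratedDeriv_const] using h

/-! ### Determinacy by moments -/

/-- Termwise integration of the power series of `cosh`, whose terms are nonnegative. -/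
lemma lintegral_cosh {Ω : Type*} [MeasurableSpace Ω] (μ : Measure Ω) {X : Ω → ℝ}
    (hX : Measurable X) (hint : ∀ n, Integrable (fun ω => X ω ^ n) μ) (t : ℝ) :
    ∫⁻ ω, ENNReal.ofReal (Real.cosh (t * X ω)) ∂μ =
      ∑' n : ℕ, ENNReal.ofReal (t ^ (2 * n) / (2 * n).factorial * ∫ ω, X ω ^ (2 * n) ∂μ) := by
  have hpos : ∀ (n : ℕ) (x : ℝ), 0 ≤ (t * x) ^ (2 * n) / ((2 * n).factorial : ℝ) := fun n x => by
    rw [pow_mul]; positivity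
  have h1 : ∀ ω, ENNReal.ofReal (Real.cosh (t * X ω)) =
      ∑' n : ℕ, ENNReal.ofReal ((t * X ω) ^ (2 * n) / (2 * n).factorial) := fun ω => by
    rw [Real.cosh_eq_tsum, ENNReal.ofReal_tsum_of_nonneg (fun n => hpos n _)
      (Real.hasSum_cosh _).summable]
  simp_rw [h1]
  rw [lintegral_tsum (fun n => by fun_prop)]
  congr 1
  funext n
  have h2 : (fun ω => (t * X ω) ^ (2 * n) / ((2 * n).factorial : ℝ)) =
      fun ω => t ^ (2 * n) / ((2 * n).factorial : ℝ) * X ω ^ (2 * n) := by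
    funext ω
    rw [mul_pow]; ring
  rw [← ofReal_integral_eq_lintegral_ofReal _ (ae_of_all _ fun ω => hpos n _), h2,
    integral_const_mul]
  rw [h2]
  exact (hint _).const_mul _

/-- A law with finite exponential moments of all orders is determined by its moments. -/
lemma map_eq_of_moments_eq {Ω : Type*} [MeasurableSpace Ω] (μ : Measure Ω)
    [IsProbabilityMeasure μ] {X : Ω → ℝ} (hX : Measurable X)
    (hint : ∀ n, Integrable (fun ω => X ω ^ n) μ) (ν : Measure ℝ) [IsProbabilityMeasure ν]
    (hν : ∀ t : ℝ, Integrable (fun x => Real.exp (t * x)) ν)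
    (hmom : ∀ n : ℕ, ∫ ω, X ω ^ n ∂μ = ∫ x, x ^ n ∂ν) : Measure.map X μ = ν := by
  have hνset : integrableExpSet id ν = Set.univ := Set.eq_univ_of_forall hν
  have hνpow : ∀ n : ℕ, Integrable (fun x : ℝ => x ^ n) ν := fun n =>
    integrable_pow_of_mem_interior_integrableExpSet (X := id) (by simp [hνset]) n
  have hexp : ∀ t : ℝ, Integrable (fun ω => Real.exp (t * X ω)) μ := by
    intro t
    have hcoshν : Integrable (fun x : ℝ => Real.cosh (t * x)) ν := by
      simp_rw [Real.cosh_eq]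
      refine ((hν t).add ?_).div_const 2
      simpa using hν (-t)
    have hfin : ∫⁻ ω, ENNReal.ofReal (Real.cosh (t * X ω)) ∂μ < ⊤ := by
      rw [lintegral_cosh μ hX hint]
      simp_rw [hmom]
      exact (lintegral_cosh ν measurable_id hνpow t).symm.trans_lt hcoshν.lintegral_lt_top
    have hcosh : Integrable (fun ω => Real.cosh (t * X ω)) μ := by
      refine ⟨(Real.continuous_cosh.measurable.comp (hX.const_mul t)).aestronglyMeasurable, ?_⟩
      rw [hasFiniteIntegral_iff_ofReal (ae_of_all _ fun ω => (Real.cosh_pos _).le)]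
      exact hfin
    refine (hcosh.const_mul 2).mono' (by fun_prop) (ae_of_all _ fun ω => ?_)
    rw [Real.norm_eq_abs, Real.abs_exp, Real.cosh_eq]
    have := Real.exp_pos (-(t * X ω))
    linarith
  have hμset : integrableExpSet X μ = Set.univ := Set.eq_univ_of_forall hexp
  have hmgf : mgf X μ = mgf id ν := by
    have aX : AnalyticOnNhd ℝ (mgf X μ) Set.univ := by
      simpa [hμset] using analyticOnNhd_mgf (X := X) (μ := μ)
    have aY : AnalyticOnNhd ℝ (mgf id ν) Set.univ := by
      simpa [hνset] using analyticOnNhd_mgf (X := id) (μ := ν)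
    refine aX.eq_of_eventuallyEq aY (z₀ := 0) ?_
    have sX := hasFPowerSeriesAt_mgf (X := X) (μ := μ) (v := 0) (by simp [hμset])
    have sY := hasFPowerSeriesAt_mgf (X := id) (μ := ν) (v := 0) (by simp [hνset])
    simp only [zero_mul, Real.exp_zero, mul_one, hmom, id] at sX sY
    have := (sX.sub sY)
    rw [sub_self] at this
    filter_upwards [this.eventually_eq_zero] with x hx
    simpa [sub_eq_zero] using hx
  -- The strip of convergence is all of `ℂ`, so the real identity extends to the imaginary axis.
  have hc : complexMGF X μ = complexMGF id ν := by
    funext z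
    exact eqOn_complexMGF_of_mgf hmgf (by simp [hμset])
  simpa using Measure.ext_of_complexMGF_eq hX.aemeasurable aemeasurable_id hc

/-! ### Gaussianity of linear combinations -/

/-- a random vector `(u 0, …, u (w-1))` with all joint moments
finite, all of whose cumulant sums of order `h > 2` vanish, is Gaussian (i.e.
every linear combination of its coordinates has a possibly degenerate Gaussian
distribution). -/
theorem statement13 {Ω : Type*} [MeasurableSpace Ω] (μ : Measure Ω)
    [IsProbabilityMeasure μ] (w : ℕ) (u : Fin w → Ω → ℝ)
    (hmeas : ∀ i, Measurable (u i))
    (hmom : ∀ (h : ℕ) (φ : Fin h → Fin w),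
      Integrable (fun ω => ∏ j, u (φ j) ω) μ)
    (hcum : ∀ (h : ℕ), 2 < h → ∀ φ : Fin h → Fin w,
      cumulantSum h (fun U => ∫ ω, ∏ j ∈ U, u (φ j) ω ∂μ) = 0) :
    ∀ a : Fin w → ℝ, ∃ (m : ℝ) (s : NNReal),
      Measure.map (fun ω => ∑ i, a i * u i ω) μ = ProbabilityTheory.gaussianReal m s := by
  intro a
  set X : Ω → ℝ := fun ω => ∑ i, a i * u i ω with hXdef
  have hX : Measurable X := by fun_prop
  -- Expectation is a linear form on the algebra of polynomials in the `u i`.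
  let S := Algebra.adjoin ℝ (Set.range u)
  have hS : ∀ f : S, Integrable (f : Ω → ℝ) μ := fun f => integrable_of_mem_adjoin μ u hmom f.2
  let E : S →ₗ[ℝ] ℝ :=
    { toFun := fun f => ∫ ω, (f : Ω → ℝ) ω ∂μ
      map_add' := fun f g => integral_add (hS f) (hS g)
      map_smul' := fun c f => integral_const_mul c _ }
  let v : Fin w → S := fun i => ⟨u i, Algebra.subset_adjoin ⟨i, rfl⟩⟩
  have hXpow : ∀ n : ℕ, (((∑ i, a i • v i) ^ n : S) : Ω → ℝ) = fun ω => X ω ^ n := by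
    intro n
    funext ω
    simp [v, X]
  have hint : ∀ n : ℕ, Integrable (fun ω => X ω ^ n) μ := fun n => by
    rw [← hXpow]; exact hS _
  have hcumX : ∀ n, 2 < n → cumulantSum n (fun U => ∫ ω, X ω ^ U.card ∂μ) = 0 := by
    intro n hn
    have := cumulantSum_linear_combination E (h := n) v (fun φ => ?_) a
    · convert this using 3 with U
      change _ = ∫ ω, (((∑ i, a i • v i) ^ U.card : S) : Ω → ℝ) ω ∂μ
      rw [hXpow]
    · convert hcum n hn φ using 3 with U
      change ∫ ω, ((∏ j ∈ U, v (φ j) : S) : Ω → ℝ) ω ∂μ = _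
      congr 1
      funext ω
      simp [v]
  set m := ∫ ω, X ω ∂μ with hm
  have hvar : ProbabilityTheory.variance X μ = ∫ ω, X ω ^ 2 ∂μ - m ^ 2 := by
    rw [ProbabilityTheory.variance_eq_sub
      ((memLp_two_iff_integrable_sq hX.aestronglyMeasurable).2 (hint 2))]
    rfl
  let s : NNReal := ⟨ProbabilityTheory.variance X μ, ProbabilityTheory.variance_nonneg X μ⟩
  refine ⟨m, s, map_eq_of_moments_eq μ hX hint _
    (fun t => ProbabilityTheory.integrable_exp_mul_gaussianReal t) ?_⟩
  refine eq_of_cumulantSum_eq _ _ (by simp) (by simp [hm]) ?_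
    (fun n hn => by rw [hcumX n hn, cumulantSum_gaussian m s hn])
  have h2 := ProbabilityTheory.variance_eq_sub
    (ProbabilityTheory.memLp_id_gaussianReal (μ := m) (v := s) 2)
  rw [ProbabilityTheory.variance_id_gaussianReal] at h2
  simp only [Pi.pow_apply, id, ProbabilityTheory.integral_id_gaussianReal] at h2
  have h3 : (s : ℝ) = ∫ ω, X ω ^ 2 ∂μ - m ^ 2 := hvar
  linarith
end
end

section
/- Let h ≥ 2 and let Ω be a set of unordered pairs of distinct elements of {1, …, h} such that the graph with vertex set {1, …, h} and edge set Ω is not connected. Then Σ over all unordered set partitions {U1, …, Ut} of {1, …, h} into nonempty blocks having the property that for every pair {i, j} ∈ Ω both i and j lie in a common block, of (−1)^{t−1}(t−1)!, equals 0. -/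
/-! The numbers `(-1)^(t-1) (t-1)!` are the coefficients of `X` in the falling factorials
`X (X - 1) ⋯ (X - t + 1)` (`coeff_one_descPochhammer`), so it suffices to show that the sum of these
falling factorials over all admissible partitions is a polynomial without linear term.

For a natural number `q`, the value at `q` of the falling factorial of degree `#P` counts the
colourings of `{0, …, h-1}` with `q` colours whose colour classes are exactly the blocks of `P`
(`card_colouring_fiber`). Colour classes of a colouring constant on the edges of `G` form
an admissible partition, and conversely; hence the sum over all admissible `P` counts the colourings
which are constant on every edge, that is, on every connected component of `G`. There are `q ^ c` of
these, where `c` is the number of components (`card_constant_on_edges`). Both sides are polynomials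
in `q`, so the sum is `X ^ c`, and `2 ≤ c` because `G` is not connected.
-/

open Finset

noncomputable section

open scoped Classical

/-- The set of colour classes of a colouring `f`. -/
def colourClasses {h q : ℕ} (f : Fin h → Fin q) : Finset (Finset (Fin h)) :=
  univ.image fun i => univ.filter fun j => f j = f i

theorem isSetPartition_colourClasses {h q : ℕ} (f : Fin h → Fin q) :
    IsSetPartition (colourClasses f) := by
  refine ⟨?_, fun i => ⟨univ.filter fun j => f j = f i, ?_, ?_⟩⟩
  · intro U hU
    obtain ⟨i, -, rfl⟩ := Finset.mem_image.1 hU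
    exact ⟨i, by simp⟩
  · simp [colourClasses]
  · rintro U ⟨hU, hi⟩
    obtain ⟨k, -, rfl⟩ := Finset.mem_image.1 hU
    have hik : f i = f k := by simpa using hi
    simp [hik]

theorem exists_colourClasses_iff {h q : ℕ} (f : Fin h → Fin q) (i j : Fin h) :
    (∃ U ∈ colourClasses f, i ∈ U ∧ j ∈ U) ↔ f i = f j := by
  constructor
  · rintro ⟨U, hU, hi, hj⟩
    obtain ⟨k, -, rfl⟩ := Finset.mem_image.1 hU
    have hik : f i = f k := by simpa using hi
    have hjk : f j = f k := by simpa using hj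
    rw [hik, hjk]
  · intro hij
    exact ⟨univ.filter fun k => f k = f i, by simp [colourClasses], by simp, by simp [hij]⟩

/-- A partition with `t` blocks is the partition into colour classes of exactly
`q (q - 1) ⋯ (q - t + 1)` colourings: these correspond to the injections from blocks to colours. -/
theorem card_colouring_fiber {h : ℕ} (q : ℕ) {P : Finset (Finset (Fin h))}
    (hP : IsSetPartition P) :
    (univ.filter fun f : Fin h → Fin q => colourClasses f = P).card
      = q.descFactorial P.card := by
  have hex : ∀ i : Fin h, ∃ U : P, i ∈ U.1 := fun i => by
    obtain ⟨U, ⟨hU, hi⟩, -⟩ := hP.2 i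
    exact ⟨⟨U, hU⟩, hi⟩
  choose b hb using hex
  have hbU : ∀ (i : Fin h) (U : P), i ∈ U.1 ↔ b i = U := fun i U =>
    ⟨fun hi => Subtype.ext ((hP.2 i).unique ⟨(b i).2, hb i⟩ ⟨U.2, hi⟩), fun e => e ▸ hb i⟩
  have hsurj : Function.Surjective b := fun U => by
    obtain ⟨i, hi⟩ := hP.1 U.1 U.2
    exact ⟨i, (hbU i U).1 hi⟩
  have key : ∀ f : Fin h → Fin q, colourClasses f = P ↔ ∀ i j, f i = f j ↔ b i = b j := by
    intro f
    constructor
    · rintro h1 i j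
      rw [← exists_colourClasses_iff, h1]
      constructor
      · rintro ⟨U, hU, hi, hj⟩
        rw [(hbU i ⟨U, hU⟩).1 hi, (hbU j ⟨U, hU⟩).1 hj]
      · intro e
        exact ⟨b i, (b i).2, hb i, e ▸ hb j⟩
    · intro h1
      have h2 : ∀ i, (univ.filter fun j => f j = f i) = (b i).1 := fun i => by
        ext j
        simp [h1, hbU]
      ext U
      simp only [colourClasses, Finset.mem_image, Finset.mem_univ, true_and, h2]
      constructor
      · rintro ⟨i, rfl⟩
        exact (b i).2
      · intro hU
        obtain ⟨i, hi⟩ := hsurj ⟨U, hU⟩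
        exact ⟨i, by rw [hi]⟩
  have hcard : Fintype.card (P ↪ Fin q) = q.descFactorial P.card := by
    rw [Fintype.card_embedding_eq, Fintype.card_fin, Fintype.card_coe]
  rw [← hcard, ← Finset.card_univ]
  symm
  refine Finset.card_bij (fun g _ i => g (b i)) ?_ ?_ ?_
  · intro g _
    simp [key]
  · intro g _ g' _ e
    ext U
    obtain ⟨i, rfl⟩ := hsurj U
    exact congrArg Fin.val (congrFun e i)
  · intro f hf
    have hf' := (key f).1 (Finset.mem_filter.1 hf).2
    refine ⟨⟨fun U => f (Function.surjInv hsurj U), fun U V e => ?_⟩, Finset.mem_univ _, ?_⟩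
    · simpa [Function.surjInv_eq] using (hf' _ _).1 e
    · funext i
      exact (hf' _ _).2 (Function.surjInv_eq hsurj (b i))

theorem card_constant_on_edges {h : ℕ} (q : ℕ) (G : SimpleGraph (Fin h)) :
    (univ.filter fun f : Fin h → Fin q => ∀ i j, G.Adj i j → f i = f j).card
      = q ^ Fintype.card G.ConnectedComponent := by
  have hcard : Fintype.card (G.ConnectedComponent → Fin q)
      = q ^ Fintype.card G.ConnectedComponent := by
    simp
  rw [← hcard, ← Finset.card_univ]
  symm
  refine Finset.card_bij (fun g _ i => g (G.connectedComponentMk i)) ?_ ?_ ?_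
  · intro g _
    simp only [Finset.mem_filter, Finset.mem_univ, true_and]
    intro i j hij
    rw [SimpleGraph.ConnectedComponent.sound hij.reachable]
  · intro g _ g' _ e
    funext c
    induction c using SimpleGraph.ConnectedComponent.ind with
    | h v => exact congrFun e v
  · intro f hf
    have hf' := (Finset.mem_filter.1 hf).2
    refine ⟨SimpleGraph.ConnectedComponent.lift f ?_, Finset.mem_univ _, rfl⟩
    intro v w p _
    induction p with
    | nil => rfl
    | cons hadj p ih => exact (hf' _ _ hadj).trans (ih (by simp_all))

theorem coeff_one_descPochhammer (t : ℕ) :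
    (descPochhammer ℤ (t + 1)).coeff 1 = (-1) ^ t * (t.factorial : ℤ) := by
  -- The recursion `(X)_(t+1) = X * (X - 1)_t` turns the coefficient into the value of `(X)_t` at -1.
  rw [descPochhammer_succ_left, Polynomial.coeff_X_mul, Polynomial.coeff_zero_eq_eval_zero,
    Polynomial.eval_comp]
  simp only [Polynomial.eval_sub, Polynomial.eval_X, Polynomial.eval_one, zero_sub]
  induction t with
  | zero => simp
  | succ t ih =>
    rw [descPochhammer_succ_eval, ih, Nat.factorial_succ]
    push_cast
    ring

/-- The generating identity: the falling factorials of the block numbers of the admissible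
partitions add up to `X ^ c`, with `c` the number of components. -/
theorem sum_descPochhammer {h : ℕ} (G : SimpleGraph (Fin h)) :
    ∑ P ∈ Finset.univ.filter (fun P : Finset (Finset (Fin h)) =>
        IsSetPartition P ∧ ∀ i j : Fin h, G.Adj i j → ∃ U ∈ P, i ∈ U ∧ j ∈ U),
      descPochhammer ℤ P.card = Polynomial.X ^ Fintype.card G.ConnectedComponent := by
  -- Two integer polynomials agreeing at all natural numbers are equal.
  refine Polynomial.eq_of_infinite_eval_eq _ _
    ((Set.infinite_range_of_injective (Nat.cast_injective (R := ℤ))).mono ?_)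
  rintro _ ⟨q, rfl⟩
  simp only [Set.mem_ofPred_eq, Polynomial.eval_finsetSum, Polynomial.eval_pow, Polynomial.eval_X,
    descPochhammer_eval_eq_descFactorial]
  rw [← Nat.cast_pow, ← card_constant_on_edges q G, ← Nat.cast_sum]
  congr 1
  symm
  rw [Finset.card_eq_sum_card_fiberwise (f := colourClasses)
    (t := Finset.univ.filter (fun P : Finset (Finset (Fin h)) =>
        IsSetPartition P ∧ ∀ i j : Fin h, G.Adj i j → ∃ U ∈ P, i ∈ U ∧ j ∈ U))]
  · refine Finset.sum_congr rfl fun P hP => ?_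
    obtain ⟨hP1, hP2⟩ := (Finset.mem_filter.1 hP).2
    rw [← card_colouring_fiber q hP1, Finset.filter_filter]
    congr 1
    ext f
    simp only [Finset.mem_filter, Finset.mem_univ, true_and, and_iff_right_iff_imp]
    rintro rfl i j hij
    exact (exists_colourClasses_iff f i j).1 (hP2 i j hij)
  · intro f hf
    have hf' := (Finset.mem_filter.1 hf).2
    refine Finset.mem_coe.2 (Finset.mem_filter.2
      ⟨Finset.mem_univ _, isSetPartition_colourClasses f, fun i j hij => ?_⟩)
    exact (exists_colourClasses_iff f i j).2 (hf' i j hij)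

/-- if the graph `G` on `{0, …, h-1}` (whose edge set is a set of
unordered pairs of distinct vertices) is not connected, then the alternating sum
of `(−1)^{t−1}(t−1)!` over all set partitions into nonempty blocks such that the
endpoints of each edge of `G` lie in a common block, vanishes. -/
theorem statement15 (h : ℕ) (hh : 2 ≤ h) (G : SimpleGraph (Fin h))
    (hG : ¬ G.Connected) :
    ∑ P ∈ Finset.univ.filter (fun P : Finset (Finset (Fin h)) =>
        IsSetPartition P ∧ ∀ i j : Fin h, G.Adj i j → ∃ U ∈ P, i ∈ U ∧ j ∈ U),
      (-1 : ℤ) ^ (P.card - 1) * ((P.card - 1).factorial : ℤ) = 0 := by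
  have : Nonempty (Fin h) := ⟨⟨0, by omega⟩⟩
  have hc : 1 < Fintype.card G.ConnectedComponent := by
    by_contra hle
    have hsub : Subsingleton G.ConnectedComponent :=
      Fintype.card_le_one_iff_subsingleton.1 (not_lt.1 hle)
    exact hG ⟨fun i j => SimpleGraph.ConnectedComponent.exact (Subsingleton.elim _ _)⟩
  have hsum := congrArg (fun p => Polynomial.coeff p 1) (sum_descPochhammer G)
  simp only [Polynomial.finsetSum_coeff, Polynomial.coeff_X_pow, hc.ne, if_false] at hsum
  rw [← hsum]
  refine Finset.sum_congr rfl fun P hP => ?_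
  -- `P` has a block because `h > 0`, so the subtraction in `P.card - 1` is genuine.
  have hpos : 0 < P.card := by
    obtain ⟨U, ⟨hU, -⟩, -⟩ := (Finset.mem_filter.1 hP).2.1.2 (Classical.arbitrary (Fin h))
    exact Finset.card_pos.2 ⟨U, hU⟩
  obtain ⟨t, ht⟩ := Nat.exists_eq_succ_of_ne_zero hpos.ne'
  rw [ht]
  exact (coeff_one_descPochhammer t).symm
end
end

section
/- Let α̂, M̂, N̂ > 0. For every nonnegative integer k, (2πi)^{−1} ∮ ((v/(v+N̂)) · ((v−α̂)/(v−α̂−M̂)))^k (v+N̂)^{−1} dv = C(M̂,N̂) + (1/2) ∫_{γ1}^{γ2} u^k ψ(u) du, where the contour integral is over a positively oriented circle centered at −N̂ of any radius r with 0 < r < N̂ + α̂ + M̂. -/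
/-!
Write `S = Nh + Mh + αh`, `a = √(Mh (αh + Mh))`, `b = √(Nh (αh + Nh))`, and let
`f v = v (v - αh) / ((v + Nh) (v - αh - Mh))` be the function whose powers are integrated. It has
degree two, with poles at `-Nh` and `αh + Mh`. In the Möbius coordinate
`z = a (v + Nh) / (b (αh + Mh - v))`, which sends these poles to `0` and `∞`, it becomes
`f = 1 - (a + b z) (a + b / z) / S²`. This is invariant under `z ↦ 1 / z`, and on the unit circle
`z = exp (iθ)` it equals `1 - D / S²` with `D = a² + b² + 2ab cos θ`, which runs from `γ₁` to `γ₂` as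
`θ` runs from `0` to `π`. The substitution `u = 1 - D / S²` turns `ψ(u) du` into
`(a² - b² + D) / (π D) dθ` (`integral_psiDens_eq`).

The form `dv / (v + Nh)` becomes `a dz / (z (b z + a))`, whose extra pole `z = -a/b` (that is,
`v = ∞`, where `f = 1`) may lie inside, on or outside the unit circle, according to the sign of
`Mh - Nh`; this is the origin of `C`. It matters only for `k = 0`, where both sides are `1`
(`half_integral_angularWeight`). For the difference of two consecutive moments the factor `1 - f`
cancels this pole and leaves a Laurent polynomial in `z`. Its integral depends only on the residue at
`z = 0`, which is the same on the given circle and on the unit circle (`circleIntegral_laurent`), and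
folding the unit circle by `θ ↦ -θ` gives the corresponding difference of the integrals of `u ^ k ψ`
(`contour_difference`). Induction on `k` concludes.
-/

open Complex Finset

noncomputable section

open scoped Classical

/-- `γ₁`. -/
def gamma1 (αh Mh Nh : ℝ) : ℝ :=
  (Real.sqrt ((αh + Mh) * (αh + Nh)) - Real.sqrt (Mh * Nh)) ^ 2 / (Nh + Mh + αh) ^ 2

/-- `γ₂`. -/
def gamma2 (αh Mh Nh : ℝ) : ℝ :=
  (Real.sqrt ((αh + Mh) * (αh + Nh)) + Real.sqrt (Mh * Nh)) ^ 2 / (Nh + Mh + αh) ^ 2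

/-- `C(M̂, N̂)`. -/
def Chat (Mh Nh : ℝ) : ℝ := if Mh > Nh then 0 else if Mh = Nh then 1 / 2 else 1

/-- The density `ψ(u)` on `(γ₁, γ₂)`. -/
def psiDens (αh Mh Nh u : ℝ) : ℝ :=
  (Mh - Nh + (Nh + Mh + αh) * (1 - u)) /
    (Real.pi * (Nh + Mh + αh) * (1 - u) *
      Real.sqrt ((gamma2 αh Mh Nh - u) * (u - gamma1 αh Mh Nh)))


/-! ### Circle integrals -/

/-- Residue of a Laurent polynomial in a local coordinate `Z`: only the coefficient of `Z⁻¹` survives,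
every other power of `Z` times `Z'` being an exact derivative. -/
lemma circleIntegral_laurent {c : ℂ} {r : ℝ} (hr : 0 < r) {Z Z' : ℂ → ℂ}
    (hZ : ∀ v ∈ Metric.sphere c r, HasDerivAt Z (Z' v) v)
    (hZ0 : ∀ v ∈ Metric.sphere c r, Z v ≠ 0)
    (hZc : ContinuousOn Z' (Metric.sphere c r))
    (hres : (∮ v in C(c, r), Z' v / Z v) = 2 * Real.pi * I)
    (p : Polynomial ℂ) (m : ℕ) :
    (∮ v in C(c, r), p.eval (Z v) / Z v ^ (m + 1) * Z' v) = 2 * Real.pi * I * p.coeff m := by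
  have hZcont : ContinuousOn Z (Metric.sphere c r) :=
    fun v hv => (hZ v hv).continuousAt.continuousWithinAt
  have hint : ∀ p : Polynomial ℂ,
      CircleIntegrable (fun v => p.eval (Z v) / Z v ^ (m + 1) * Z' v) c r := by
    intro p
    apply ContinuousOn.circleIntegrable hr.le
    exact ((p.continuous.comp_continuousOn hZcont).div (hZcont.pow _)
      (fun v hv => pow_ne_zero _ (hZ0 v hv))).mul hZc
  induction p using Polynomial.induction_on' with
  | add p q hp hq =>
    have : (∮ v in C(c, r), (p + q).eval (Z v) / Z v ^ (m + 1) * Z' v)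
        = ∮ v in C(c, r), (p.eval (Z v) / Z v ^ (m + 1) * Z' v
          + q.eval (Z v) / Z v ^ (m + 1) * Z' v) := by
      congr 1; ext v; rw [Polynomial.eval_add]; ring
    rw [this, circleIntegral.integral_add (hint p) (hint q), hp, hq, Polynomial.coeff_add]
    ring
  | monomial n x =>
    rw [Polynomial.coeff_monomial]
    by_cases hnm : n = m
    · subst hnm
      rw [if_pos rfl, mul_comm, ← hres, ← circleIntegral.integral_const_mul]
      apply circleIntegral.integral_congr hr.le
      intro v hv
      have := hZ0 v hv
      simp only [Polynomial.eval_monomial]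
      field_simp
      ring
    · rw [if_neg hnm, mul_zero]
      have hne : ((n : ℤ) - m : ℂ) ≠ 0 := by
        intro h
        apply hnm
        have : (n : ℂ) = m := by simpa [sub_eq_zero] using h
        exact_mod_cast this
      apply circleIntegral.integral_eq_zero_of_hasDerivWithinAt hr.le
        (f := fun v => x / ((n : ℤ) - m : ℂ) * Z v ^ ((n : ℤ) - m))
      intro v hv
      have h0 := hZ0 v hv
      have h1 := ((hasDerivAt_zpow ((n : ℤ) - m) (Z v) (Or.inl h0)).comp v (hZ v hv)).const_mul
        (x / ((n : ℤ) - m : ℂ))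
      refine (h1.congr_deriv ?_).hasDerivWithinAt
      have e : Z v ^ ((n : ℤ) - m - 1) = Z v ^ n / Z v ^ (m + 1) := by
        rw [sub_sub, zpow_sub₀ h0]; norm_cast
      rw [e, Polynomial.eval_monomial]
      push_cast at hne ⊢
      field_simp

/-- A unit-circle integral against `dz/z` folded onto the upper half circle. -/
lemma circleIntegral_fold {F : ℂ → ℂ} {g : ℝ → ℝ}
    (hF : ContinuousOn F (Metric.sphere 0 1))
    (hg : ∀ θ : ℝ, F (exp (θ * I)) + F (exp (-(θ * I))) = 2 * (g θ : ℂ)) :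
    (2 * (Real.pi : ℂ) * I)⁻¹ * (∮ z in C(0, 1), F z / z)
      = (((1 / Real.pi) * ∫ θ in (0 : ℝ)..Real.pi, g θ : ℝ) : ℂ) := by
  have hcont : Continuous fun θ : ℝ => F (exp (θ * I)) := by
    apply hF.comp_continuous (by fun_prop)
    intro θ
    simp [Complex.norm_exp_ofReal_mul_I]
  have h1 : (∮ z in C(0, 1), F z / z) = I * ∫ θ in (0 : ℝ)..(2 * Real.pi), F (exp (θ * I)) := by
    rw [circleIntegral, ← intervalIntegral.integral_const_mul]
    congr 1; ext θ
    have := Complex.exp_ne_zero (θ * I)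
    simp only [deriv_circleMap, circleMap, smul_eq_mul, ofReal_one, one_mul, zero_add]
    field_simp
  have h2 : (∫ θ in (Real.pi : ℝ)..(2 * Real.pi), F (exp (θ * I)))
      = ∫ θ in (0 : ℝ)..Real.pi, F (exp (-(θ * I))) := by
    have := intervalIntegral.integral_comp_sub_left (a := 0) (b := Real.pi)
      (fun θ : ℝ => F (exp (θ * I))) (2 * Real.pi)
    rw [sub_zero, show 2 * Real.pi - Real.pi = Real.pi by ring] at this
    rw [← this]
    congr 1; ext θ
    congr 1
    push_cast
    rw [sub_mul, sub_eq_add_neg, Complex.exp_add, Complex.exp_two_pi_mul_I, one_mul]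
  have hcont' : Continuous fun θ : ℝ => F (exp (-(θ * I))) := by
    have := hcont.comp continuous_neg
    simpa [Function.comp_def] using this
  rw [h1, ← intervalIntegral.integral_add_adjacent_intervals (b := Real.pi)
    (hcont.intervalIntegrable _ _) (hcont.intervalIntegrable _ _), h2,
    ← intervalIntegral.integral_add (hcont.intervalIntegrable _ _)
      (hcont'.intervalIntegrable _ _)]
  simp only [hg]
  rw [intervalIntegral.integral_const_mul, intervalIntegral.integral_ofReal]
  push_cast
  have := Real.pi_ne_zero
  have : (Real.pi : ℂ) ≠ 0 := by exact_mod_cast this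
  field_simp

/-! ### The angular variable -/

/-- The substitution `u = 1 - (a² + b² + 2ab cos θ) / S²`, with `θ` running over `(0, π)`. No
integrability of `G` is needed. -/
lemma integral_cos_substitution {a b S : ℝ} (ha : 0 < a) (hb : 0 < b) (hS : 0 < S) (G : ℝ → ℝ) :
    (∫ u in (1 - (a + b) ^ 2 / S ^ 2)..(1 - (a - b) ^ 2 / S ^ 2), G u)
      = ∫ θ in Set.Ioo 0 Real.pi,
          2 * a * b * Real.sin θ / S ^ 2 *
            G (1 - (a ^ 2 + b ^ 2 + 2 * a * b * Real.cos θ) / S ^ 2) := by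
  set U : ℝ → ℝ := fun θ => 1 - (a ^ 2 + b ^ 2 + 2 * a * b * Real.cos θ) / S ^ 2 with hU
  have hab : 0 < a * b := mul_pos ha hb
  have hS2 : 0 < S ^ 2 := by positivity
  have hle : 1 - (a + b) ^ 2 / S ^ 2 ≤ 1 - (a - b) ^ 2 / S ^ 2 := by
    gcongr 1 - ?_ / _
    nlinarith
  have himg : U '' Set.Ioo 0 Real.pi
      = Set.Ioo (1 - (a + b) ^ 2 / S ^ 2) (1 - (a - b) ^ 2 / S ^ 2) := by
    ext y
    constructor
    · rintro ⟨θ, ⟨h0, h1⟩, rfl⟩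
      have hc1 : Real.cos θ < 1 := by
        simpa using Real.cos_lt_cos_of_nonneg_of_le_pi le_rfl h1.le h0
      have hc2 : -1 < Real.cos θ := by
        simpa using Real.cos_lt_cos_of_nonneg_of_le_pi h0.le le_rfl h1
      constructor
      · simp only [hU]
        gcongr 1 - ?_ / _
        nlinarith
      · simp only [hU]
        gcongr 1 - ?_ / _
        nlinarith
    · rintro ⟨h0, h1⟩
      have h0' : (1 - y) * S ^ 2 < (a + b) ^ 2 := by
        rw [← lt_div_iff₀ hS2]; linarith
      have h1' : (a - b) ^ 2 < (1 - y) * S ^ 2 := by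
        rw [← div_lt_iff₀ hS2]; linarith
      have hx1 : ((1 - y) * S ^ 2 - a ^ 2 - b ^ 2) / (2 * (a * b)) < 1 := by
        rw [div_lt_iff₀ (by positivity)]; nlinarith
      have hx0 : -1 < ((1 - y) * S ^ 2 - a ^ 2 - b ^ 2) / (2 * (a * b)) := by
        rw [lt_div_iff₀ (by positivity)]; nlinarith
      refine ⟨Real.arccos (((1 - y) * S ^ 2 - a ^ 2 - b ^ 2) / (2 * (a * b))), ⟨?_, ?_⟩, ?_⟩
      · exact Real.arccos_pos.2 hx1
      · refine lt_of_le_of_ne (Real.arccos_le_pi _) fun h => ?_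
        exact absurd (Real.arccos_eq_pi.1 h) (not_le.2 hx0)
      · simp only [hU]
        rw [Real.cos_arccos hx0.le hx1.le]
        field_simp
        ring
  rw [intervalIntegral.integral_of_le hle, MeasureTheory.integral_Ioc_eq_integral_Ioo, ← himg,
    MeasureTheory.integral_image_eq_integral_abs_deriv_smul
      (f' := fun θ => 2 * a * b * Real.sin θ / S ^ 2) measurableSet_Ioo]
  · refine MeasureTheory.setIntegral_congr_fun measurableSet_Ioo fun θ hθ => ?_
    have hs := Real.sin_pos_of_pos_of_lt_pi hθ.1 hθ.2
    simp only [smul_eq_mul]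
    rw [abs_of_pos (by positivity)]
  · intro θ _
    have h := ((((Real.hasDerivAt_cos θ).const_mul (2 * a * b)).const_add
      (a ^ 2 + b ^ 2)).div_const (S ^ 2)).const_sub 1
    refine (h.congr_deriv ?_).hasDerivWithinAt
    ring
  · intro x hx y hy hxy
    have hcos : Real.cos x = Real.cos y := by
      simp only [hU] at hxy
      field_simp at hxy
      have : (a * b) * (Real.cos x - Real.cos y) = 0 := by linarith
      rcases mul_eq_zero.1 this with h | h
      · exact absurd h hab.ne'
      · linarith
    exact Real.injOn_cos ⟨hx.1.le, hx.2.le⟩ ⟨hy.1.le, hy.2.le⟩ hcos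

/-- The density of the measure in the angular variable, up to the factor `1 / π`; with
`D = a² + b² + 2ab cos θ` it equals `(a² - b² + D) / D` wherever `D ≠ 0`. In the case `a = b` the
quotient is replaced by its constant value, so that the function is continuous at the zero `θ = π`
of `D` too. -/
def angularWeight (a b θ : ℝ) : ℝ :=
  if a = b then 1 else (a ^ 2 - b ^ 2) / (a ^ 2 + b ^ 2 + 2 * a * b * Real.cos θ) + 1

lemma angular_denominator_pos {a b : ℝ} (ha : 0 < a) (hb : 0 < b) (hab : a ≠ b) (θ : ℝ) :
    0 < a ^ 2 + b ^ 2 + 2 * a * b * Real.cos θ := by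
  have h1 : 0 < (a - b) ^ 2 := by
    have := sub_ne_zero.2 hab
    positivity
  nlinarith [Real.neg_one_le_cos θ, mul_pos ha hb]

lemma continuous_angularWeight {a b : ℝ} (ha : 0 < a) (hb : 0 < b) :
    Continuous (angularWeight a b) := by
  unfold angularWeight
  by_cases h : a = b
  · simp only [h, if_true]
    exact continuous_const
  · simp only [h, if_false]
    exact (continuous_const.div (by fun_prop)
      fun θ => (angular_denominator_pos ha hb h θ).ne').add continuous_const

lemma mul_angularWeight {a b : ℝ} (ha : 0 < a) (hb : 0 < b) (θ : ℝ) :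
    (a ^ 2 + b ^ 2 + 2 * a * b * Real.cos θ) * angularWeight a b θ
      = 2 * (a ^ 2 + a * b * Real.cos θ) := by
  unfold angularWeight
  split_ifs with h
  · subst h; ring
  · rw [mul_add, mul_div_cancel₀ _ (angular_denominator_pos ha hb h θ).ne']
    ring

/-- Total mass: this is where the constant `C` enters, according to whether the pole `-a/b` lies
inside, on or outside the unit circle. -/
lemma half_integral_angularWeight {a b : ℝ} (ha : 0 < a) (hb : 0 < b) :
    1 / 2 * (1 / Real.pi * ∫ θ in (0 : ℝ)..Real.pi, angularWeight a b θ) = 1 - Chat a b := by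
  have hpi := Real.pi_ne_zero
  by_cases h : a = b
  · subst h
    simp [angularWeight, Chat]
    field_simp
    norm_num
  have hac : (a : ℂ) ≠ 0 := by exact_mod_cast ha.ne'
  have hbc : (b : ℂ) ≠ 0 := by exact_mod_cast hb.ne'
  have hpole : ∀ z ∈ Metric.sphere (0 : ℂ) 1, (b : ℂ) * z + a ≠ 0 := by
    intro z hz h0
    have hz1 : ‖z‖ = 1 := by simpa using hz
    have : (b : ℂ) * z = -a := by linear_combination h0
    have := congrArg norm this
    rw [norm_mul, norm_neg, hz1, Complex.norm_of_nonneg ha.le, Complex.norm_of_nonneg hb.le] at this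
    exact h (by linarith)
  have hF : ContinuousOn (fun z : ℂ => (a : ℂ) / (b * z + a)) (Metric.sphere 0 1) :=
    continuousOn_const.div (by fun_prop) hpole
  have hfold := circleIntegral_fold (g := fun θ => angularWeight a b θ / 2) hF (by
    intro θ
    have h1 := hpole (exp (θ * I)) (by simp [Complex.norm_exp_ofReal_mul_I])
    have h2 := hpole (exp (-(θ * I))) (by
      have := Complex.norm_exp_ofReal_mul_I (-θ)
      simpa using this)
    have hD := (angular_denominator_pos ha hb h θ).ne'
    have hw : angularWeight a b θ
        = 2 * (a ^ 2 + a * b * Real.cos θ) / (a ^ 2 + b ^ 2 + 2 * a * b * Real.cos θ) := by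
      rw [eq_div_iff hD, ← mul_angularWeight ha hb, mul_comm]
    have hcos : 2 * Complex.cos θ = exp (θ * I) + exp (-(θ * I)) := by
      rw [Complex.two_cos, neg_mul]
    have hinv : exp (θ * I) * exp (-(θ * I)) = 1 := by
      rw [← Complex.exp_add]; simp
    have hD' : (a ^ 2 + b ^ 2 + 2 * a * b * Complex.cos θ : ℂ) ≠ 0 := by exact_mod_cast hD
    rw [hw]
    push_cast
    rw [div_add_div _ _ h1 h2]
    have e : (b * exp (θ * I) + a) * (b * exp (-(θ * I)) + a)
        = (a ^ 2 + b ^ 2 + 2 * a * b * Complex.cos θ : ℂ) := by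
      linear_combination (b : ℂ) ^ 2 * hinv - (a : ℂ) * b * hcos
    rw [e, mul_div_cancel₀ _ (two_ne_zero : (2 : ℂ) ≠ 0)]
    congr 1
    linear_combination (-(a * b : ℂ)) * hcos)
  have hci : CircleIntegrable (fun z : ℂ => (z - 0)⁻¹) 0 1 := by
    apply ContinuousOn.circleIntegrable zero_le_one
    refine ContinuousOn.inv₀ (by fun_prop) fun z hz => ?_
    have : ‖z‖ = 1 := by simpa using hz
    rw [sub_zero, ← norm_ne_zero_iff, this]; norm_num
  have hpole' : ∀ z : ℂ, (b : ℂ) * z + a ≠ 0 → z - (-(a / b : ℂ)) ≠ 0 := by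
    intro z hz h0
    apply hz
    have : z = -(a / b : ℂ) := by linear_combination h0
    rw [this]; field_simp; ring
  have hci' : CircleIntegrable (fun z : ℂ => (z - (-(a / b : ℂ)))⁻¹) 0 1 := by
    apply ContinuousOn.circleIntegrable zero_le_one
    exact ContinuousOn.inv₀ (by fun_prop) fun z hz => hpole' z (hpole z hz)
  -- partial fractions: `a / ((b z + a) z) = 1 / z - 1 / (z + a / b)`
  have hsplit : (∮ z in C(0, 1), (a : ℂ) / (b * z + a) / z)
      = (∮ z in C(0, 1), (z - 0)⁻¹) - ∮ z in C(0, 1), (z - (-(a / b : ℂ)))⁻¹ := by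
    rw [← circleIntegral.integral_sub hci hci']
    refine circleIntegral.integral_congr zero_le_one fun z hz => ?_
    have h1 := hpole z hz
    have hz0 : z ≠ 0 := by
      have : ‖z‖ = 1 := by simpa using hz
      rw [← norm_ne_zero_iff, this]; norm_num
    have e : z - (-(a / b : ℂ)) = (b * z + a) / b := by field_simp; ring
    simp only [sub_zero, e]
    field_simp
    ring
  have hpic : (Real.pi : ℂ) ≠ 0 := by exact_mod_cast hpi
  have hnorm : ‖(-(a / b : ℂ))‖ = a / b := by
    rw [norm_neg, norm_div, Complex.norm_of_nonneg ha.le, Complex.norm_of_nonneg hb.le]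
  have key : (2 * (Real.pi : ℂ) * I)⁻¹ * (∮ z in C(0, 1), (a : ℂ) / (b * z + a) / z)
      = ((1 - Chat a b : ℝ) : ℂ) := by
    rw [hsplit, circleIntegral.integral_sub_center_inv _ one_ne_zero]
    rcases lt_or_gt_of_ne h with hlt | hgt
    · rw [circleIntegral.integral_sub_inv_of_mem_ball]
      · simp [Chat, hlt.not_gt, h]
      · rw [mem_ball_zero_iff, hnorm, div_lt_one hb]; exact hlt
    · have h0 : (∮ z in C(0, 1), (z - (-(a / b : ℂ)))⁻¹) = 0 := by
        have hne : ∀ z ∈ Metric.closedBall (0 : ℂ) 1, z - (-(a / b : ℂ)) ≠ 0 := by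
          intro z hz h0
          have hz1 : ‖z‖ ≤ 1 := by simpa using hz
          rw [sub_eq_zero.1 h0, hnorm, div_le_one hb] at hz1
          linarith
        refine Complex.circleIntegral_eq_zero_of_differentiable_on_off_countable zero_le_one
          Set.countable_empty (ContinuousOn.inv₀ (by fun_prop) hne) fun z hz => ?_
        exact DifferentiableAt.inv (by fun_prop) (hne z (Metric.ball_subset_closedBall hz.1))
      rw [h0]
      have hgt' : b < a := hgt
      simp only [Chat, gt_iff_lt, hgt', if_true, sub_zero, ofReal_one]
      field_simp
  rw [key] at hfold
  have := Complex.ofReal_injective hfold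
  rw [this, intervalIntegral.integral_div]
  ring

/-- The integral side in the angular variable. -/
lemma integral_psiDens_eq {αh Mh Nh a b S : ℝ} (hαh : 0 < αh) (hMh : 0 < Mh) (hNh : 0 < Nh)
    (ha : 0 < a) (hb : 0 < b) (hS : S = Nh + Mh + αh)
    (ha2 : a ^ 2 = Mh * (αh + Mh)) (hb2 : b ^ 2 = Nh * (αh + Nh)) (k : ℕ) :
    (∫ u in gamma1 αh Mh Nh..gamma2 αh Mh Nh, u ^ k * psiDens αh Mh Nh u)
      = 1 / Real.pi * ∫ θ in (0 : ℝ)..Real.pi,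
          (1 - (a ^ 2 + b ^ 2 + 2 * a * b * Real.cos θ) / S ^ 2) ^ k * angularWeight a b θ := by
  have hSpos : 0 < S := by rw [hS]; positivity
  have hprod : Real.sqrt ((αh + Mh) * (αh + Nh)) * Real.sqrt (Mh * Nh) = a * b := by
    rw [← Real.sqrt_mul (by positivity), ← Real.sqrt_sq (mul_pos ha hb).le]
    congr 1
    rw [mul_pow, ha2, hb2]; ring
  have hX := Real.sq_sqrt (show 0 ≤ (αh + Mh) * (αh + Nh) by positivity)
  have hY := Real.sq_sqrt (show 0 ≤ Mh * Nh by positivity)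
  have hg1 : gamma1 αh Mh Nh = 1 - (a + b) ^ 2 / S ^ 2 := by
    rw [gamma1, ← hS, eq_sub_iff_add_eq, ← add_div, div_eq_one_iff_eq (by positivity)]
    rw [hS]
    linear_combination hX + hY - 2 * hprod + ha2 + hb2
  have hg2 : gamma2 αh Mh Nh = 1 - (a - b) ^ 2 / S ^ 2 := by
    rw [gamma2, ← hS, eq_sub_iff_add_eq, ← add_div, div_eq_one_iff_eq (by positivity)]
    rw [hS]
    linear_combination hX + hY + 2 * hprod + ha2 + hb2
  rw [hg1, hg2, integral_cos_substitution ha hb hSpos, ← intervalIntegral.integral_const_mul,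
    intervalIntegral.integral_of_le Real.pi_pos.le, MeasureTheory.integral_Ioc_eq_integral_Ioo]
  refine MeasureTheory.setIntegral_congr_fun measurableSet_Ioo fun θ hθ => ?_
  have hs := Real.sin_pos_of_pos_of_lt_pi hθ.1 hθ.2
  have hc : -1 < Real.cos θ := by
    simpa using Real.cos_lt_cos_of_nonneg_of_le_pi hθ.1.le le_rfl hθ.2
  have hD : 0 < a ^ 2 + b ^ 2 + 2 * a * b * Real.cos θ := by
    nlinarith [mul_pos ha hb, sq_nonneg (a - b)]
  have hw := mul_angularWeight ha hb θ
  have hpi := Real.pi_pos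
  -- the Jacobian of the substitution cancels the square root in the density
  have hroot : Real.sqrt ((gamma2 αh Mh Nh
        - (1 - (a ^ 2 + b ^ 2 + 2 * a * b * Real.cos θ) / S ^ 2))
      * ((1 - (a ^ 2 + b ^ 2 + 2 * a * b * Real.cos θ) / S ^ 2) - gamma1 αh Mh Nh))
      = 2 * a * b * Real.sin θ / S ^ 2 := by
    rw [hg1, hg2, ← Real.sqrt_sq (show 0 ≤ 2 * a * b * Real.sin θ / S ^ 2 by positivity)]
    congr 1
    field_simp
    rw [Real.sin_sq]
    ring
  have hdiff : Mh - Nh = (a ^ 2 - b ^ 2) / S := by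
    rw [eq_div_iff hSpos.ne', ha2, hb2, hS]; ring
  simp only [psiDens]
  rw [hroot, ← hS, hdiff]
  have hw' : angularWeight a b θ = 2 * (a ^ 2 + a * b * Real.cos θ)
      / (a ^ 2 + b ^ 2 + 2 * a * b * Real.cos θ) := by
    rw [eq_div_iff hD.ne', mul_comm, hw]
  rw [hw']
  generalize hDD : a ^ 2 + b ^ 2 + 2 * a * b * Real.cos θ = D at hD
  have hnum : 2 * (a ^ 2 + a * b * Real.cos θ) = a ^ 2 - b ^ 2 + D := by rw [← hDD]; ring
  rw [hnum, sub_sub_cancel]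
  have := hD.ne'
  field_simp

/-! ### Differences of contour moments -/

/-- The difference of two consecutive moments on the contour side. In the coordinate `Z`, which
sends `-Nh` to `0` and the other pole `αh + Mh` to `∞`, the integrand is a Laurent polynomial: the
factor `1 - f` cancels the pole that `dv / (v + Nh)` has at `v = ∞`. -/
lemma contour_difference {αh Mh Nh a b S r : ℝ}
    (ha : 0 < a) (hb : 0 < b) (hS : S = Nh + Mh + αh)
    (ha2 : a ^ 2 = Mh * (αh + Mh)) (hb2 : b ^ 2 = Nh * (αh + Nh))
    (hr : 0 < r) (hr' : r < S) (k : ℕ) :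
    (2 * (Real.pi : ℂ) * I)⁻¹ * (∮ v in C((-Nh : ℂ), r),
        (v / (v + (Nh : ℂ)) * ((v - (αh : ℂ)) / (v - (αh : ℂ) - (Mh : ℂ)))) ^ k *
          (1 - v / (v + (Nh : ℂ)) * ((v - (αh : ℂ)) / (v - (αh : ℂ) - (Mh : ℂ)))) *
          (v + (Nh : ℂ))⁻¹)
      = ((1 / Real.pi * ∫ θ in (0 : ℝ)..Real.pi,
          (1 - (a ^ 2 + b ^ 2 + 2 * a * b * Real.cos θ) / S ^ 2) ^ k *
            ((a ^ 2 + a * b * Real.cos θ) / S ^ 2) : ℝ) : ℂ) := by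
  have hSpos : 0 < S := hr.trans hr'
  have hac : (a : ℂ) ≠ 0 := by exact_mod_cast ha.ne'
  have hbc : (b : ℂ) ≠ 0 := by exact_mod_cast hb.ne'
  have hSc : (S : ℂ) ≠ 0 := by exact_mod_cast hSpos.ne'
  have hSd : (S : ℂ) = Nh + Mh + αh := by rw [hS]; push_cast; ring
  have ha2c : (a : ℂ) ^ 2 = Mh * (αh + Mh) := by exact_mod_cast ha2
  have hb2c : (b : ℂ) ^ 2 = Nh * (αh + Nh) := by exact_mod_cast hb2
  have hv1 : ∀ v ∈ Metric.sphere (-Nh : ℂ) r, v + (Nh : ℂ) ≠ 0 := by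
    intro v hv h0
    rw [mem_sphere_iff_norm, sub_neg_eq_add, h0, norm_zero] at hv
    exact hr.ne hv
  have hv2 : ∀ v ∈ Metric.closedBall (-Nh : ℂ) r, (αh + Mh - v : ℂ) ≠ 0 := by
    intro v hv h0
    have : v + (Nh : ℂ) = S := by rw [hSd]; linear_combination -h0
    rw [mem_closedBall_iff_norm, sub_neg_eq_add, this, Complex.norm_of_nonneg hSpos.le] at hv
    linarith
  have hv2' : ∀ v ∈ Metric.sphere (-Nh : ℂ) r, (αh + Mh - v : ℂ) ≠ 0 :=
    fun v hv => hv2 v (Metric.sphere_subset_closedBall hv)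
  set Z : ℂ → ℂ := fun v => a * (v + Nh) / (b * (αh + Mh - v)) with hZdef
  set Z' : ℂ → ℂ := fun v => a * S / (b * (αh + Mh - v) ^ 2) with hZ'def
  -- `p z / z ^ (k + 2)` is `U ^ k * (1 - U) / (v + Nh) * dv/dz` with
  -- `U = 1 - (a + b z) (a + b / z) / S²`, which is `f` expressed through `z = Z v`
  set p : Polynomial ℂ :=
    (Polynomial.X - Polynomial.C (1 / (S : ℂ) ^ 2)
        * (Polynomial.C (a : ℂ) + Polynomial.C (b : ℂ) * Polynomial.X)
        * (Polynomial.C (a : ℂ) * Polynomial.X + Polynomial.C (b : ℂ))) ^ k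
      * (Polynomial.C ((a : ℂ) / (S : ℂ) ^ 2)
        * (Polynomial.C (a : ℂ) * Polynomial.X + Polynomial.C (b : ℂ))) with hp
  have hpe : ∀ z : ℂ, p.eval z = (z - (a + b * z) * (a * z + b) / S ^ 2) ^ k
      * (a / S ^ 2 * (a * z + b)) := by
    intro z
    simp only [hp, Polynomial.eval_mul, Polynomial.eval_pow, Polynomial.eval_sub,
      Polynomial.eval_add, Polynomial.eval_X, Polynomial.eval_C]
    congr 2
    ring
  have hZd : ∀ v ∈ Metric.sphere (-Nh : ℂ) r, HasDerivAt Z (Z' v) v := by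
    intro v hv
    have h2 := hv2' v hv
    have h := (((hasDerivAt_id v).add_const (Nh : ℂ)).const_mul (a : ℂ)).div
      (((hasDerivAt_id v).const_sub (αh + Mh : ℂ)).const_mul (b : ℂ)) (mul_ne_zero hbc h2)
    refine h.congr_deriv ?_
    simp only [hZ'def, id, hSd]
    field_simp
    ring
  have hZ0 : ∀ v ∈ Metric.sphere (-Nh : ℂ) r, Z v ≠ 0 := fun v hv =>
    div_ne_zero (mul_ne_zero hac (hv1 v hv)) (mul_ne_zero hbc (hv2' v hv))
  have hZc : ContinuousOn Z' (Metric.sphere (-Nh : ℂ) r) :=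
    continuousOn_const.div (by fun_prop) fun v hv =>
      mul_ne_zero hbc (pow_ne_zero _ (hv2' v hv))
  have hres : (∮ v in C((-Nh : ℂ), r), Z' v / Z v) = 2 * Real.pi * I := by
    have e : (∮ v in C((-Nh : ℂ), r), Z' v / Z v)
        = ∮ v in C((-Nh : ℂ), r), ((v - (-Nh : ℂ))⁻¹ + (αh + Mh - v : ℂ)⁻¹) := by
      refine circleIntegral.integral_congr hr.le fun v hv => ?_
      have h1 := hv1 v hv
      have h2 := hv2' v hv
      simp only [hZdef, hZ'def, hSd, sub_neg_eq_add]
      field_simp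
      ring
    have e0 : (∮ v in C((-Nh : ℂ), r), (αh + Mh - v : ℂ)⁻¹) = 0 :=
      Complex.circleIntegral_eq_zero_of_differentiable_on_off_countable hr.le
        Set.countable_empty (ContinuousOn.inv₀ (by fun_prop) hv2) fun v hv =>
          DifferentiableAt.inv (by fun_prop) (hv2 v (Metric.ball_subset_closedBall hv.1))
    rw [e, circleIntegral.integral_add, circleIntegral.integral_sub_center_inv _ hr.ne', e0,
      add_zero]
    · refine ContinuousOn.circleIntegrable hr.le (ContinuousOn.inv₀ (by fun_prop) fun v hv => ?_)
      rw [sub_neg_eq_add]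
      exact hv1 v hv
    · exact ContinuousOn.circleIntegrable hr.le (ContinuousOn.inv₀ (by fun_prop) hv2')
  have hsph : ∀ z ∈ Metric.sphere (0 : ℂ) 1, z ≠ 0 := by
    intro z hz h0
    rw [h0] at hz
    simp at hz
  have hL : (∮ v in C((-Nh : ℂ), r),
        (v / (v + (Nh : ℂ)) * ((v - (αh : ℂ)) / (v - (αh : ℂ) - (Mh : ℂ)))) ^ k *
          (1 - v / (v + (Nh : ℂ)) * ((v - (αh : ℂ)) / (v - (αh : ℂ) - (Mh : ℂ)))) *
          (v + (Nh : ℂ))⁻¹)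
      = ∮ v in C((-Nh : ℂ), r), p.eval (Z v) / Z v ^ (k + 1 + 1) * Z' v := by
    refine circleIntegral.integral_congr hr.le fun v hv => ?_
    have h1 := hv1 v hv
    have h2 := hv2' v hv
    have h3 := hZ0 v hv
    have hf1 : v / (v + (Nh : ℂ)) * ((v - (αh : ℂ)) / (v - (αh : ℂ) - (Mh : ℂ)))
        = -(v * (v - αh)) / ((v + Nh) * (αh + Mh - v)) := by
      have : v - (αh : ℂ) - (Mh : ℂ) = -(αh + Mh - v) := by ring
      rw [this]
      field_simp
    have hA : (a + b * Z v : ℂ) = a * S / (αh + Mh - v) := by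
      simp only [hZdef, hSd]
      field_simp
      ring
    have hB : (a * Z v + b : ℂ)
        = (Mh * (αh + Mh) * (v + Nh) + Nh * (αh + Nh) * (αh + Mh - v)) / (b * (αh + Mh - v)) := by
      rw [← ha2c, ← hb2c]
      simp only [hZdef]
      field_simp
    have hf2 : (Z v - (a + b * Z v) * (a * Z v + b) / S ^ 2)
        = -(v * (v - αh)) / ((v + Nh) * (αh + Mh - v)) * Z v := by
      rw [hA, hB]
      have hSc' := hSc
      simp only [hZdef]
      rw [hSd] at hSc' ⊢
      field_simp
      ring
    have hf3 : (1 - -(v * (v - αh)) / ((v + Nh) * (αh + Mh - v))) * (v + (Nh : ℂ))⁻¹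
        = (a / S ^ 2 * (a * Z v + b)) / Z v ^ 2 * Z' v := by
      rw [hB]
      have hSc' := hSc
      simp only [hZdef, hZ'def]
      rw [hSd] at hSc' ⊢
      field_simp
      ring
    simp only [hpe]
    rw [hf1, hf2, mul_assoc, hf3, mul_pow]
    field_simp
    ring
  -- the same residue, computed in the coordinate `z` on the unit circle
  have hR : (∮ z in C(0, 1), p.eval z / z ^ (k + 1 + 1) * 1) = 2 * Real.pi * I * p.coeff (k + 1) :=
    circleIntegral_laurent (Z := fun z => z) (Z' := fun _ => 1) one_pos
      (fun v _ => hasDerivAt_id v) hsph continuousOn_const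
      (by simpa using circleIntegral.integral_sub_center_inv (0 : ℂ) one_ne_zero) p (k + 1)
  rw [hL, circleIntegral_laurent hr hZd hZ0 hZc hres, ← hR]
  have hfold := circleIntegral_fold
    (F := fun z => (1 - (a + b * z) * (a + b * z⁻¹) / S ^ 2 : ℂ) ^ k
      * (a / S ^ 2 * (a + b * z⁻¹)))
    (g := fun θ => (1 - (a ^ 2 + b ^ 2 + 2 * a * b * Real.cos θ) / S ^ 2) ^ k *
            ((a ^ 2 + a * b * Real.cos θ) / S ^ 2)) (by
      have hi : ContinuousOn (fun z : ℂ => z⁻¹) (Metric.sphere 0 1) :=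
        continuousOn_id.inv₀ hsph
      fun_prop) (by
    intro θ
    have hcos : 2 * Complex.cos θ = exp (θ * I) + exp (-(θ * I)) := by
      rw [Complex.two_cos, neg_mul]
    have hinv : exp (θ * I) * exp (-(θ * I)) = 1 := by
      rw [← Complex.exp_add]; simp
    have e1 : (a + b * exp (θ * I) : ℂ) * (a + b * exp (-(θ * I)))
        = a ^ 2 + b ^ 2 + 2 * a * b * Complex.cos θ := by
      linear_combination (b : ℂ) ^ 2 * hinv - (a : ℂ) * b * hcos
    push_cast
    simp only [← Complex.exp_neg, neg_neg]
    rw [mul_comm (a + b * exp (-(θ * I)) : ℂ) (a + b * exp (θ * I)), e1]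
    linear_combination (-(1 - (a ^ 2 + b ^ 2 + 2 * a * b * Complex.cos θ) / S ^ 2 : ℂ) ^ k
      * (a * b / S ^ 2)) * hcos)
  rw [← hfold]
  congr 1
  refine circleIntegral.integral_congr zero_le_one fun z hz => ?_
  have hz0 := hsph z hz
  have e : (z - (a + b * z) * (a * z + b) / S ^ 2 : ℂ)
      = (1 - (a + b * z) * (a + b * z⁻¹) / S ^ 2) * z := by
    field_simp
  simp only [hpe]
  rw [e, mul_pow]
  field_simp
  ring

/-- the contour-integral form of the moments of the limiting
interlacing measure:
`(2πi)⁻¹ ∮ ((v/(v+N̂))·((v−α̂)/(v−α̂−M̂)))^k (v+N̂)⁻¹ dv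
  = C(M̂,N̂) + (1/2) ∫_{γ₁}^{γ₂} u^k ψ(u) du`
over any positively oriented circle centered at `−N̂` of radius
`0 < r < N̂ + α̂ + M̂`. -/
theorem statement17 (αh Mh Nh : ℝ) (hαh : 0 < αh) (hMh : 0 < Mh) (hNh : 0 < Nh)
    (k : ℕ) (r : ℝ) (hr : 0 < r) (hr' : r < Nh + αh + Mh) :
    (2 * (Real.pi : ℂ) * I)⁻¹ *
        (∮ v in C((-Nh : ℂ), r),
          (v / (v + (Nh : ℂ)) * ((v - (αh : ℂ)) / (v - (αh : ℂ) - (Mh : ℂ)))) ^ k *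
            (v + (Nh : ℂ))⁻¹)
      = ((Chat Mh Nh +
          (1 / 2) *
            ∫ u in gamma1 αh Mh Nh..gamma2 αh Mh Nh, u ^ k * psiDens αh Mh Nh u : ℝ) : ℂ) := by
  have hS : Nh + Mh + αh = Nh + Mh + αh := rfl
  have hA : 0 < Mh * (αh + Mh) := by positivity
  have hB : 0 < Nh * (αh + Nh) := by positivity
  obtain ⟨a, ha, ha2⟩ : ∃ a : ℝ, 0 < a ∧ a ^ 2 = Mh * (αh + Mh) :=
    ⟨_, Real.sqrt_pos.2 hA, Real.sq_sqrt hA.le⟩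
  obtain ⟨b, hb, hb2⟩ : ∃ b : ℝ, 0 < b ∧ b ^ 2 = Nh * (αh + Nh) :=
    ⟨_, Real.sqrt_pos.2 hB, Real.sq_sqrt hB.le⟩
  have hgt : b < a ↔ Nh < Mh := by
    rw [← pow_lt_pow_iff_left₀ hb.le ha.le two_ne_zero, ha2, hb2]
    constructor <;> intro h <;> nlinarith
  have heq : a = b ↔ Mh = Nh := by
    rw [← pow_left_inj₀ ha.le hb.le two_ne_zero, ha2, hb2]
    constructor
    · intro h
      have : (Mh - Nh) * (αh + Mh + Nh) = 0 := by linear_combination h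
      rcases mul_eq_zero.1 this with h | h
      · linarith
      · linarith
    · rintro rfl; rfl
  have hC : Chat a b = Chat Mh Nh := by
    simp only [Chat, gt_iff_lt, hgt, heq]
  have hpi : (Real.pi : ℂ) ≠ 0 := by exact_mod_cast Real.pi_ne_zero
  have hv1 : ∀ v ∈ Metric.sphere (-Nh : ℂ) r, v + (Nh : ℂ) ≠ 0 := by
    intro v hv h0
    rw [mem_sphere_iff_norm, sub_neg_eq_add, h0, norm_zero] at hv
    exact hr.ne hv
  have hv2 : ∀ v ∈ Metric.sphere (-Nh : ℂ) r, (v - αh - Mh : ℂ) ≠ 0 := by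
    intro v hv h0
    have : v + (Nh : ℂ) = ((Nh + αh + Mh : ℝ) : ℂ) := by push_cast; linear_combination h0
    rw [mem_sphere_iff_norm, sub_neg_eq_add, this,
      Complex.norm_of_nonneg (by positivity)] at hv
    linarith
  have hint : ∀ j : ℕ, CircleIntegrable (fun v : ℂ =>
      (v / (v + (Nh : ℂ)) * ((v - (αh : ℂ)) / (v - (αh : ℂ) - (Mh : ℂ)))) ^ j *
            (v + (Nh : ℂ))⁻¹) (-Nh : ℂ) r := by
    intro j
    apply ContinuousOn.circleIntegrable hr.le
    exact ((((continuousOn_id.div (by fun_prop) hv1).mul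
      (ContinuousOn.div (by fun_prop) (by fun_prop) hv2)).pow j)).mul
      (ContinuousOn.inv₀ (by fun_prop) hv1)
  rw [integral_psiDens_eq hαh hMh hNh ha hb rfl ha2 hb2]
  induction k with
  | zero =>
    simp only [pow_zero, one_mul]
    rw [half_integral_angularWeight ha hb, hC, add_sub_cancel]
    have := circleIntegral.integral_sub_center_inv (-Nh : ℂ) hr.ne'
    simp only [sub_neg_eq_add] at this
    rw [this, ofReal_one, inv_mul_cancel₀]
    simp [hpi]
  | succ k ih =>
    have hdiff := contour_difference ha hb rfl ha2 hb2 hr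
      (by linarith : r < Nh + Mh + αh) k
    have hsub := circleIntegral.integral_sub (hint k) (hint (k + 1))
    have hcongr : (∮ v in C((-Nh : ℂ), r),
        ((v / (v + (Nh : ℂ)) * ((v - (αh : ℂ)) / (v - (αh : ℂ) - (Mh : ℂ)))) ^ k *
            (v + (Nh : ℂ))⁻¹
          - (v / (v + (Nh : ℂ)) * ((v - (αh : ℂ)) / (v - (αh : ℂ) - (Mh : ℂ)))) ^ (k + 1) *
            (v + (Nh : ℂ))⁻¹))
        = ∮ v in C((-Nh : ℂ), r),
        (v / (v + (Nh : ℂ)) * ((v - (αh : ℂ)) / (v - (αh : ℂ) - (Mh : ℂ)))) ^ k *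
          (1 - v / (v + (Nh : ℂ)) * ((v - (αh : ℂ)) / (v - (αh : ℂ) - (Mh : ℂ)))) *
          (v + (Nh : ℂ))⁻¹ := by
      congr 1; ext v; ring
    rw [hcongr] at hsub
    rw [hsub, mul_sub, ih] at hdiff
    -- `1 - u = D / S²` and `D * angularWeight = 2 (a² + a b cos θ)`
    have hreal : (∫ θ in (0 : ℝ)..Real.pi,
          (1 - (a ^ 2 + b ^ 2 + 2 * a * b * Real.cos θ) / (Nh + Mh + αh) ^ 2) ^ k *
            ((a ^ 2 + a * b * Real.cos θ) / (Nh + Mh + αh) ^ 2))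
        = 1 / 2 * ((∫ θ in (0 : ℝ)..Real.pi,
          (1 - (a ^ 2 + b ^ 2 + 2 * a * b * Real.cos θ) / (Nh + Mh + αh) ^ 2) ^ k *
            angularWeight a b θ)
          - ∫ θ in (0 : ℝ)..Real.pi,
          (1 - (a ^ 2 + b ^ 2 + 2 * a * b * Real.cos θ) / (Nh + Mh + αh) ^ 2) ^ (k + 1) *
            angularWeight a b θ) := by
      have hwc := continuous_angularWeight ha hb
      have hci : ∀ j : ℕ, Continuous fun θ : ℝ =>
          (1 - (a ^ 2 + b ^ 2 + 2 * a * b * Real.cos θ) / (Nh + Mh + αh) ^ 2) ^ j *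
            angularWeight a b θ := fun j => by fun_prop
      rw [← intervalIntegral.integral_sub ((hci k).intervalIntegrable _ _)
        ((hci (k + 1)).intervalIntegrable _ _), ← intervalIntegral.integral_const_mul]
      congr 1; ext θ
      have hw := mul_angularWeight ha hb θ
      linear_combination (-(1 / 2) *
        (1 - (a ^ 2 + b ^ 2 + 2 * a * b * Real.cos θ) / (Nh + Mh + αh) ^ 2) ^ k
          / (Nh + Mh + αh) ^ 2) * hw
    rw [hreal] at hdiff
    push_cast at hdiff ⊢
    linear_combination -hdiff
end
end
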